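/- There exists a universal constant c > 0 such that the following holds. Let X be an isotropic random vector in ℝⁿ with log-concave density which is ψ_α (α ∈ [1,2]) with constant b_α, and let A be an n×n real matrix with ‖A‖_HS² = n. Set ñ := n/(‖A‖_op²·b_α²). Then P(|AX| ≥ (1+t)√n) ≤ exp(−c·ñ^{α/2}·min(t^{2+α}, t)) for all t ≥ 0. -/

import Mathlib

open MeasureTheory ProbabilityTheory Real
open scoped ENNReal RealInnerProductSpace Pointwise NNReal

noncomputable section

/-- A nonnegative function is log-concave if `f(λx+(1-λ)y) ≥ f(x)^λ f(y)^{1-λ}`. -/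
def IsLogConcaveFn {E : Type*} [AddCommGroup E] [Module ℝ E] (f : E → ℝ) : Prop :=
  (∀ x, 0 ≤ f x) ∧
  ∀ x y : E, ∀ l : ℝ, 0 ≤ l → l ≤ 1 →
    f x ^ l * f y ^ (1 - l) ≤ f (l • x + (1 - l) • y)

/-- Hilbert-Schmidt (Frobenius) norm of a matrix. -/
def hsNorm {n : ℕ} (A : Matrix (Fin n) (Fin n) ℝ) : ℝ :=
  Real.sqrt (∑ i, ∑ j, (A i j) ^ 2)

/-- Operator norm of a matrix acting on Euclidean space. -/
def opNorm {n : ℕ} (A : Matrix (Fin n) (Fin n) ℝ) : ℝ :=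
  ‖LinearMap.toContinuousLinearMap (Matrix.toEuclideanLin A)‖

/-- Application of a matrix to a Euclidean vector. -/
def mApp {n : ℕ} (A : Matrix (Fin n) (Fin n) ℝ) (x : EuclideanSpace ℝ (Fin n)) :
    EuclideanSpace ℝ (Fin n) := Matrix.toEuclideanLin A x

/-- The random vector `X` has density `f` with respect to Lebesgue measure. -/
def HasDensityFn {Ω : Type*} [MeasurableSpace Ω] (P : Measure Ω) {n : ℕ}
    (X : Ω → EuclideanSpace ℝ (Fin n)) (f : EuclideanSpace ℝ (Fin n) → ℝ) : Prop :=
  Measurable X ∧ Measure.map X P = volume.withDensity fun x => ENNReal.ofReal (f x)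

/-- `X` is isotropic: centered with identity covariance. -/
def Isotropic {Ω : Type*} [MeasurableSpace Ω] (P : Measure Ω) {n : ℕ}
    (X : Ω → EuclideanSpace ℝ (Fin n)) : Prop :=
  (∫ ω, X ω ∂P) = 0 ∧
  ∀ θ η : EuclideanSpace ℝ (Fin n), (∫ ω, ⟪X ω, θ⟫ * ⟪X ω, η⟫ ∂P) = ⟪θ, η⟫

/-- `X` is ψ_α with constant `b`. -/
def IsPsiAlpha {Ω : Type*} [MeasurableSpace Ω] (P : Measure Ω) {n : ℕ}
    (X : Ω → EuclideanSpace ℝ (Fin n)) (α b : ℝ) : Prop :=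
  ∀ p : ℝ, 2 ≤ p → ∀ y : EuclideanSpace ℝ (Fin n),
    (∫ ω, |⟪X ω, y⟫| ^ p ∂P) ^ (1/p) ≤ b * p ^ (1/α) * (∫ ω, ⟪X ω, y⟫ ^ 2 ∂P) ^ ((1:ℝ)/2)

/-- `G` is a standard Gaussian random vector in `ℝⁿ`. -/
def IsStdGaussian {Ω : Type*} [MeasurableSpace Ω] (P : Measure Ω) {n : ℕ}
    (G : Ω → EuclideanSpace ℝ (Fin n)) : Prop :=
  Measurable G ∧
  Measure.map G P = volume.withDensity fun x =>
    ENNReal.ofReal ((2 * π) ^ (-(n:ℝ)/2) * Real.exp (-‖x‖ ^ 2 / 2))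

/-- Surface area of the unit sphere `S^{k-1}` in `ℝᵏ`. -/
def sphereVol (k : ℕ) : ℝ := 2 * π ^ ((k : ℝ)/2) / Real.Gamma ((k : ℝ)/2)

/-- The marginal density `π_F g(x) = ∫_{F^⊥} g(x+y) dy`. -/
def marginalDensity {n : ℕ} (g : EuclideanSpace ℝ (Fin n) → ℝ)
    (F : Submodule ℝ (EuclideanSpace ℝ (Fin n))) (x : EuclideanSpace ℝ (Fin n)) : ℝ :=
  ∫ y : Fᗮ, g (x + y)

/-- `h_{k,p}(u) = vol(S^{k-1}) ∫₀^∞ t^{p+k-1} π_{u(E₀)} g(t u(θ₀)) dt`. -/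
def hkp {n : ℕ} (g : EuclideanSpace ℝ (Fin n) → ℝ)
    (E₀ : Submodule ℝ (EuclideanSpace ℝ (Fin n))) (θ₀ : EuclideanSpace ℝ (Fin n))
    (k : ℕ) (p : ℝ) (u : Matrix (Fin n) (Fin n) ℝ) : ℝ :=
  sphereVol k * ∫ t in Set.Ioi (0:ℝ), t ^ (p + (k:ℝ) - 1) *
    marginalDensity g (Submodule.map (Matrix.toEuclideanLin u) E₀) (t • mApp u θ₀)

/-- Support functional of the one-sided L_q-centroid body `Z⁺_q(w)`. -/
def suppZplus {m : ℕ} (w : EuclideanSpace ℝ (Fin m) → ℝ) (q : ℝ)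
    (y : EuclideanSpace ℝ (Fin m)) : ℝ :=
  (2 * ∫ x, (max ⟪x, y⟫ 0) ^ q * w x) ^ (1/q)

/-- Ball's body `K_q(w) = {x : q ∫₀^∞ t^{q-1} w(tx) dt ≥ 1}`. -/
def ballBody {m : ℕ} (w : EuclideanSpace ℝ (Fin m) → ℝ) (q : ℝ) :
    Set (EuclideanSpace ℝ (Fin m)) :=
  {x | 1 ≤ q * ∫ t in Set.Ioi (0:ℝ), t ^ (q-1) * w (t • x)}

/-- The one-sided L_q-centroid body `Z⁺_q(w)`, as the convex set with support
functional `suppZplus w q`. -/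
def ZplusBody {m : ℕ} (w : EuclideanSpace ℝ (Fin m) → ℝ) (q : ℝ) :
    Set (EuclideanSpace ℝ (Fin m)) :=
  {x | ∀ y, ⟪x, y⟫ ≤ suppZplus w q y}

/-!
Let `Y` be the symmetrization of `A X`, let `N = ‖A‖_HS ^ 2` and let `Γ` be a `k`-row matrix with
independent standard Gaussian entries. Conditionally on `Y`, the vector `Γ Y + √N G` is a centred
Gaussian of variance `S ^ 2 = N + |Y| ^ 2`, so averaging over `Γ` a suitable radial moment of the
density of `Γ Y + √N G` gives `E S ^ p` up to a factor depending on `k` and `p` only.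

For fixed `Γ` the radial moments satisfy a reverse Hölder inequality by Prékopa–Leindler, and they
change by at most the exponential of a quadratic cost when `Γ` is perturbed: the `ψ_α` condition
controls the moments of `Y` under the measure tilted by the radial moment. The Gaussian law of `Γ`
satisfies a Prékopa–Leindler inequality that tolerates precisely such a cost, so the inequality
survives the average over `Γ` and yields `E S ^ (2 p) ≤ exp (C p r) * (E S ^ p) ^ 2` for `k ≈ p / r`
and `p = (N / B ^ 2) ^ (α / 2) * r ^ (1 + α)`, where `B = b ‖A‖_op`.

Doubling `p` repeatedly from `E S ^ 2 = 3 N` bounds `E S ^ p` with an error that is a geometric sum.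
Markov's inequality then gives the tail estimate for `t ≤ 1`, and Borell's lemma extends it to
`t ≥ 1`.
-/

/-! ### Prékopa–Leindler inequalities for midpoints -/

/-- The Prékopa–Leindler inequality at the midpoint holds for `μ` when the product `u x * v y` is
only controlled up to the cost `c x y`. -/
def PrekopaLeindlerWith {W : Type*} [AddCommGroup W] [Module ℝ W] [MeasurableSpace W]
    (μ : Measure W) (c : W → W → ℝ≥0∞) : Prop :=
  ∀ u v w : W → ℝ≥0∞, Measurable u → Measurable v → Measurable w →
    (∀ x y, u x * v y ≤ c x y * w (midpoint ℝ x y) ^ 2) →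
    (∫⁻ x, u x ∂μ) * (∫⁻ x, v x ∂μ) ≤ (∫⁻ x, w x ∂μ) ^ 2

/-- The classical Prékopa–Leindler inequality at the midpoint, satisfied by log-concave measures. -/
def PrekopaLeindler {W : Type*} [AddCommGroup W] [Module ℝ W] [MeasurableSpace W]
    (μ : Measure W) : Prop :=
  PrekopaLeindlerWith μ fun _ _ => 1

lemma volume_add_volume_le_of_isCompact {A B C : Set ℝ} (hA : IsCompact A) (hB : IsCompact B)
    (hA₀ : A.Nonempty) (hB₀ : B.Nonempty) (h : ∀ a ∈ A, ∀ b ∈ B, midpoint ℝ a b ∈ C) :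
    volume A + volume B ≤ 2 * volume C := by
  obtain ⟨a, ha, ha_max⟩ := hA.exists_isGreatest hA₀
  obtain ⟨b, hb, hb_min⟩ := hB.exists_isLeast hB₀
  have h_disjoint : AEDisjoint volume ((· + b) '' A) ((a + ·) '' B) := by
    refine measure_mono_null (t := {a + b}) ?_ (by simp)
    rintro z ⟨⟨x, hx, rfl⟩, ⟨y, hy, hxy⟩⟩
    rw [Set.mem_singleton_iff]
    linarith [ha_max hx, hb_min hy]
  have h_subset : (· + b) '' A ∪ (a + ·) '' B ⊆ (2 : ℝ) • C := by
    rintro z (⟨x, hx, rfl⟩ | ⟨y, hy, rfl⟩)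
    · exact ⟨_, h x hx b hb, by simp [midpoint_eq_smul_add]⟩
    · exact ⟨_, h a ha y hy, by simp [midpoint_eq_smul_add]⟩
  calc volume A + volume B = volume ((· + b) '' A) + volume ((a + ·) '' B) := by simp
    _ = volume ((· + b) '' A ∪ (a + ·) '' B) :=
      (measure_union₀ (hB.image (by fun_prop)).measurableSet.nullMeasurableSet h_disjoint).symm
    _ ≤ volume ((2 : ℝ) • C) := measure_mono h_subset
    _ = 2 * volume C := by simp [Measure.addHaar_smul]

lemma volume_add_volume_le_of_midpoint_mem {A B C : Set ℝ} (hA : MeasurableSet A)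
    (hB : MeasurableSet B) (hA₀ : A.Nonempty) (hB₀ : B.Nonempty)
    (h : ∀ a ∈ A, ∀ b ∈ B, midpoint ℝ a b ∈ C) :
    volume A + volume B ≤ 2 * volume C := by
  obtain ⟨a, ha⟩ := hA₀
  obtain ⟨b, hb⟩ := hB₀
  rw [hA.measure_eq_iSup_isCompact, hB.measure_eq_iSup_isCompact]
  simp only [iSup_and']
  refine ENNReal.biSup_add_biSup_le' ⟨∅, by simp⟩ ⟨∅, by simp⟩ ?_
  rintro K ⟨hKA, hK⟩ L ⟨hLB, hL⟩
  calc volume K + volume L ≤ volume (insert a K) + volume (insert b L) := by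
        gcongr <;> exact Set.subset_insert _ _
    _ ≤ 2 * volume C :=
      volume_add_volume_le_of_isCompact (hK.insert a) (hL.insert b) (Set.insert_nonempty _ _)
        (Set.insert_nonempty _ _) fun x hx y hy =>
          h x (Set.insert_subset ha hKA hx) y (Set.insert_subset hb hLB hy)

lemma lintegral_eq_lintegral_meas_ofReal_lt {Ω : Type*} [MeasurableSpace Ω] (μ : Measure Ω)
    {f : Ω → ℝ≥0∞} (hf : Measurable f) (hf_top : ∀ x, f x ≠ ∞) :
    ∫⁻ x, f x ∂μ = ∫⁻ t in Set.Ioi (0 : ℝ), μ {x | ENNReal.ofReal t < f x} := by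
  have h := lintegral_eq_lintegral_meas_lt μ (f := fun x => (f x).toReal)
    (.of_forall fun _ => ENNReal.toReal_nonneg) hf.ennreal_toReal.aemeasurable
  simp only [ENNReal.ofReal_toReal (hf_top _)] at h
  rw [h]
  refine setLIntegral_congr_fun measurableSet_Ioi fun t ht => ?_
  simp only [ENNReal.ofReal_lt_iff_lt_toReal (le_of_lt ht) (hf_top _)]

lemma lintegral_add_lintegral_le_of_iSup_eq_one {u v w : ℝ → ℝ≥0∞} (hu : Measurable u)
    (hv : Measurable v) (hw : Measurable w) (hu₁ : ⨆ x, u x = 1) (hv₁ : ⨆ x, v x = 1)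
    (h : ∀ x y, u x * v y ≤ w (midpoint ℝ x y) ^ 2) :
    (∫⁻ x, u x) + (∫⁻ x, v x) ≤ 2 * ∫⁻ x, w x := by
  have hu_le : ∀ x, u x ≤ 1 := fun x => hu₁ ▸ le_iSup u x
  have hv_le : ∀ x, v x ≤ 1 := fun x => hv₁ ▸ le_iSup v x
  have layer_cake : ∀ f : ℝ → ℝ≥0∞, Measurable f → (∀ x, f x ≤ 1) →
      ∫⁻ x, f x = ∫⁻ t in Set.Ioi (0 : ℝ), volume {x | ENNReal.ofReal t < f x} :=
    fun f hf hf_le => lintegral_eq_lintegral_meas_ofReal_lt _ hf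
      fun x => ((hf_le x).trans_lt ENNReal.one_lt_top).ne
  have h_meas : ∀ f : ℝ → ℝ≥0∞, Measurable fun t : ℝ => volume {x | ENNReal.ofReal t < f x} :=
    fun f => Antitone.measurable fun s t hst =>
      measure_mono fun x hx => (ENNReal.ofReal_le_ofReal hst).trans_lt hx
  suffices h_min : (∫⁻ x, u x) + (∫⁻ x, v x) ≤ 2 * ∫⁻ x, min (w x) 1 from
    h_min.trans (by gcongr; exact min_le_left _ _)
  rw [layer_cake u hu hu_le, layer_cake v hv hv_le,
    layer_cake _ (hw.min measurable_const) fun x => min_le_right _ _,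
    ← lintegral_const_mul _ (h_meas _), ← lintegral_add_left (h_meas _)]
  refine setLIntegral_mono' measurableSet_Ioi fun t _ => ?_
  rcases le_or_gt 1 (ENNReal.ofReal t) with ht | ht
  · simp [((hu_le _).trans ht).not_gt, ((hv_le _).trans ht).not_gt]
  have h_nonempty : ∀ f : ℝ → ℝ≥0∞, ⨆ x, f x = 1 → {x | ENNReal.ofReal t < f x}.Nonempty :=
    fun f hf => by
      rw [← hf] at ht
      exact lt_iSup_iff.1 ht
  refine volume_add_volume_le_of_midpoint_mem (measurableSet_lt measurable_const hu)
    (measurableSet_lt measurable_const hv) (h_nonempty u hu₁) (h_nonempty v hv₁)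
    fun x hx y hy => lt_min (lt_of_pow_lt_pow_left' 2 ?_) ht
  calc ENNReal.ofReal t ^ 2 < u x * v y := by rw [sq]; exact ENNReal.mul_lt_mul hx hy
    _ ≤ w (midpoint ℝ x y) ^ 2 := h x y

lemma ennreal_four_mul_le_add_sq (a b : ℝ≥0∞) : 4 * (a * b) ≤ (a + b) ^ 2 := by
  by_cases ha : a = ∞
  · simp [ha]
  by_cases hb : b = ∞
  · simp [hb]
  lift a to ℝ≥0 using ha
  lift b to ℝ≥0 using hb
  norm_cast
  rw [← mul_assoc]
  exact four_mul_le_sq_add a b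

lemma ennreal_rpow_half_sq (a : ℝ≥0∞) : (a ^ (1 / 2 : ℝ)) ^ 2 = a := by
  rw [← ENNReal.rpow_natCast, ← ENNReal.rpow_mul]
  norm_num

lemma lintegral_mul_lintegral_le_of_iSup_ne_top {u v w : ℝ → ℝ≥0∞} (hu : Measurable u)
    (hv : Measurable v) (hw : Measurable w) (hu_top : ⨆ x, u x ≠ ∞) (hv_top : ⨆ x, v x ≠ ∞)
    (h : ∀ x y, u x * v y ≤ w (midpoint ℝ x y) ^ 2) :
    (∫⁻ x, u x) * (∫⁻ x, v x) ≤ (∫⁻ x, w x) ^ 2 := by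
  set a := ⨆ x, u x with ha
  set b := ⨆ x, v x with hb
  by_cases ha₀ : a = 0
  · simp [ENNReal.iSup_eq_zero.1 ha₀]
  by_cases hb₀ : b = 0
  · simp [ENNReal.iSup_eq_zero.1 hb₀]
  set s := (a * b) ^ (1 / 2 : ℝ)
  have hs : s⁻¹ ^ 2 = a⁻¹ * b⁻¹ := by
    rw [← ENNReal.inv_pow, ennreal_rpow_half_sq, ENNReal.mul_inv (.inl ha₀) (.inl hu_top)]
  have h_normalized : a⁻¹ * (∫⁻ x, u x) + b⁻¹ * (∫⁻ x, v x) ≤ 2 * (s⁻¹ * ∫⁻ x, w x) := by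
    rw [← lintegral_const_mul _ hu, ← lintegral_const_mul _ hv, ← lintegral_const_mul _ hw]
    refine lintegral_add_lintegral_le_of_iSup_eq_one (hu.const_mul _) (hv.const_mul _)
      (hw.const_mul _) ?_ ?_ fun x y => ?_
    · rw [← ENNReal.mul_iSup, ← ha, ENNReal.inv_mul_cancel ha₀ hu_top]
    · rw [← ENNReal.mul_iSup, ← hb, ENNReal.inv_mul_cancel hb₀ hv_top]
    · rw [mul_pow, hs, mul_mul_mul_comm]
      gcongr
      exact h x y
  have h_scaled : (4 * (a⁻¹ * b⁻¹)) * ((∫⁻ x, u x) * (∫⁻ x, v x)) ≤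
      (4 * (a⁻¹ * b⁻¹)) * (∫⁻ x, w x) ^ 2 := by
    calc _ = 4 * ((a⁻¹ * ∫⁻ x, u x) * (b⁻¹ * ∫⁻ x, v x)) := by ring
      _ ≤ (2 * (s⁻¹ * ∫⁻ x, w x)) ^ 2 :=
        (ennreal_four_mul_le_add_sq _ _).trans (pow_le_pow_left' h_normalized 2)
      _ = _ := by rw [mul_pow, mul_pow, hs]; ring
  have h_ne_zero : 4 * (a⁻¹ * b⁻¹) ≠ 0 := by simp [hu_top, hv_top]
  have h_ne_top : 4 * (a⁻¹ * b⁻¹) ≠ ∞ := by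
    refine ENNReal.mul_ne_top (by simp) (ENNReal.mul_ne_top ?_ ?_) <;> simpa
  exact (ENNReal.mul_le_mul_iff_right h_ne_zero h_ne_top).1 h_scaled

lemma lintegral_eq_iSup_lintegral_min_natCast {Ω : Type*} [MeasurableSpace Ω] (μ : Measure Ω)
    {f : Ω → ℝ≥0∞} (hf : Measurable f) :
    ∫⁻ x, f x ∂μ = ⨆ n : ℕ, ∫⁻ x, min (f x) n ∂μ := by
  rw [← lintegral_iSup (fun n => hf.min measurable_const) fun n m hnm x => by gcongr]
  simp_rw [← inf_iSup_eq, ENNReal.iSup_natCast, inf_top_eq]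

lemma prekopaLeindler_volume_real : PrekopaLeindler (volume : Measure ℝ) := by
  intro u v w hu hv hw h
  rw [lintegral_eq_iSup_lintegral_min_natCast _ hu, lintegral_eq_iSup_lintegral_min_natCast _ hv]
  rw [ENNReal.iSup_mul]
  refine iSup_le fun n => ?_
  rw [ENNReal.mul_iSup]
  refine iSup_le fun m => ?_
  have h_bdd : ∀ (f : ℝ → ℝ≥0∞) (n : ℕ), ⨆ x, min (f x) n ≠ ∞ := fun f n =>
    ((iSup_le fun x => min_le_right _ _).trans_lt (ENNReal.natCast_lt_top n)).ne
  refine lintegral_mul_lintegral_le_of_iSup_ne_top (hu.min measurable_const)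
    (hv.min measurable_const) hw (h_bdd u n) (h_bdd v m) fun x y => ?_
  calc min (u x) n * min (v y) m ≤ u x * v y := by gcongr <;> exact min_le_left _ _
    _ ≤ w (midpoint ℝ x y) ^ 2 := by simpa using h x y

namespace PrekopaLeindlerWith

variable {W W' : Type*} [AddCommGroup W] [Module ℝ W] [MeasurableSpace W]
  [AddCommGroup W'] [Module ℝ W'] [MeasurableSpace W'] {μ : Measure W} {c : W → W → ℝ≥0∞}

lemma map (hμ : PrekopaLeindlerWith μ c) {f : W →ₗ[ℝ] W'} (hf : Measurable f)
    {c' : W' → W' → ℝ≥0∞} (hc : ∀ x y, c' (f x) (f y) ≤ c x y) :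
    PrekopaLeindlerWith (μ.map f) c' := by
  intro u v w hu hv hw h
  rw [lintegral_map hu hf, lintegral_map hv hf, lintegral_map hw hf]
  refine hμ _ _ _ (hu.comp hf) (hv.comp hf) (hw.comp hf) fun x y => ?_
  have h_mid : f (midpoint ℝ x y) = midpoint ℝ (f x) (f y) := f.toAffineMap.map_midpoint x y
  rw [h_mid]
  exact (h _ _).trans (by gcongr; exact hc x y)

lemma withDensity (hμ : PrekopaLeindlerWith μ c) {g : W → ℝ≥0∞} (hg : Measurable g)
    {c' : W → W → ℝ≥0∞} (hc : ∀ x y, g x * g y * c' x y ≤ c x y * g (midpoint ℝ x y) ^ 2) :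
    PrekopaLeindlerWith (μ.withDensity g) c' := by
  intro u v w hu hv hw h
  rw [lintegral_withDensity_eq_lintegral_mul _ hg hu,
    lintegral_withDensity_eq_lintegral_mul _ hg hv, lintegral_withDensity_eq_lintegral_mul _ hg hw]
  refine hμ _ _ _ (hg.mul hu) (hg.mul hv) (hg.mul hw) fun x y => ?_
  simp only [Pi.mul_apply]
  calc g x * u x * (g y * v y) = g x * g y * (u x * v y) := by ring
    _ ≤ g x * g y * (c' x y * w (midpoint ℝ x y) ^ 2) := mul_le_mul_right (h x y) _
    _ = g x * g y * c' x y * w (midpoint ℝ x y) ^ 2 := by ring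
    _ ≤ c x y * g (midpoint ℝ x y) ^ 2 * w (midpoint ℝ x y) ^ 2 := mul_le_mul_left (hc x y) _
    _ = c x y * (g (midpoint ℝ x y) * w (midpoint ℝ x y)) ^ 2 := by ring

lemma prod [SFinite μ] {ν : Measure W'} [SFinite ν] {c' : W' → W' → ℝ≥0∞}
    (hμ : PrekopaLeindlerWith μ c) (hν : PrekopaLeindlerWith ν c') :
    PrekopaLeindlerWith (μ.prod ν) fun x y => c x.1 y.1 * c' x.2 y.2 := by
  intro u v w hu hv hw h
  rw [lintegral_prod _ hu.aemeasurable, lintegral_prod _ hv.aemeasurable,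
    lintegral_prod _ hw.aemeasurable]
  refine hμ _ _ _ hu.lintegral_prod_right' hv.lintegral_prod_right' hw.lintegral_prod_right'
    fun x y => ?_
  have h_fiber := hν (fun z => u (x, z)) (fun z => v (y, z))
    (fun z => c x y ^ (1 / 2 : ℝ) * w (midpoint ℝ x y, z)) (by fun_prop) (by fun_prop)
    (by fun_prop) fun z z' => by
      rw [mul_pow, ennreal_rpow_half_sq, mul_left_comm, ← mul_assoc]
      exact h (x, z) (y, z')
  rwa [lintegral_const_mul _ (by fun_prop), mul_pow, ennreal_rpow_half_sq] at h_fiber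

lemma pi [SigmaFinite μ] (hμ : PrekopaLeindlerWith μ c) (n : ℕ) :
    PrekopaLeindlerWith (Measure.pi fun _ : Fin n => μ) fun x y => ∏ i, c (x i) (y i) := by
  induction n with
  | zero =>
    intro u v w hu hv hw h
    rw [Measure.pi_of_empty, lintegral_dirac' _ hu, lintegral_dirac' _ hv, lintegral_dirac' _ hw]
    have h_zero := h isEmptyElim isEmptyElim
    simp only [Finset.univ_eq_empty, Finset.prod_empty, one_mul] at h_zero
    rwa [Subsingleton.elim (midpoint ℝ _ _) _] at h_zero
  | succ n ih =>
    rw [← ((measurePreserving_piFinSuccAbove (fun _ : Fin (n + 1) => μ) 0).symm).map_eq]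
    have h_cons : ⇑(MeasurableEquiv.piFinSuccAbove (fun _ : Fin (n + 1) => W) 0).symm =
        (Fin.consLinearEquiv ℝ fun _ : Fin (n + 1) => W).toLinearMap := by
      ext x i
      refine Fin.cases ?_ (fun i => ?_) i <;> simp [MeasurableEquiv.piFinSuccAbove]
    have h_meas := (MeasurableEquiv.piFinSuccAbove (fun _ : Fin (n + 1) => W) 0).symm.measurable
    rw [h_cons] at h_meas ⊢
    exact (hμ.prod ih).map h_meas fun x y => by simp [Fin.prod_univ_succ]

end PrekopaLeindlerWith

section LogConcave

variable {E : Type*} [NormedAddCommGroup E] [InnerProductSpace ℝ E] [FiniteDimensional ℝ E]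
  [MeasurableSpace E] [BorelSpace E]

lemma prekopaLeindler_volume_euclideanSpace (n : ℕ) :
    PrekopaLeindler (volume : Measure (EuclideanSpace ℝ (Fin n))) := by
  have h_toLp := PiLp.volume_preserving_toLp (Fin n)
  rw [← h_toLp.map_eq, volume_pi]
  exact (prekopaLeindler_volume_real.pi n).map
    (f := (WithLp.linearEquiv 2 ℝ (Fin n → ℝ)).symm.toLinearMap) h_toLp.measurable (by simp)

variable (E) in
lemma prekopaLeindler_volume : PrekopaLeindler (volume : Measure E) := by
  have h_repr := (stdOrthonormalBasis ℝ E).measurePreserving_repr_symm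
  rw [← h_repr.map_eq]
  exact (prekopaLeindler_volume_euclideanSpace _).map
    (f := (stdOrthonormalBasis ℝ E).repr.symm.toLinearEquiv.toLinearMap) h_repr.measurable
    fun _ _ => le_rfl

lemma IsLogConcaveFn.concaveOn_log {V : Type*} [AddCommGroup V] [Module ℝ V] {f : V → ℝ}
    (hf : IsLogConcaveFn f) : ConcaveOn ℝ {x | 0 < f x} fun x => log (f x) := by
  have h_combo : ∀ x, 0 < f x → ∀ y, 0 < f y → ∀ l m : ℝ, 0 ≤ l → 0 ≤ m → l + m = 1 →
      f x ^ l * f y ^ m ≤ f (l • x + m • y) := by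
    rintro x - y - l m hl hm hlm
    obtain rfl : m = 1 - l := by linarith
    exact hf.2 x y l hl (by linarith)
  refine ⟨fun x hx y hy l m hl hm hlm => ?_, fun x hx y hy l m hl hm hlm => ?_⟩
  all_goals
    rw [Set.mem_ofPred_eq] at hx hy
    have h_pos : 0 < f x ^ l * f y ^ m := by positivity
  · exact h_pos.trans_le (h_combo x hx y hy l m hl hm hlm)
  · have h_log := log_le_log h_pos (h_combo x hx y hy l m hl hm hlm)
    rwa [log_mul (by positivity) (by positivity), log_rpow hx, log_rpow hy] at h_log

lemma IsLogConcaveFn.mul_le_midpoint_sq {V : Type*} [AddCommGroup V] [Module ℝ V] {f : V → ℝ}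
    (hf : IsLogConcaveFn f) (x y : V) : f x * f y ≤ f (midpoint ℝ x y) ^ 2 := by
  have hx := hf.1 x
  have hy := hf.1 y
  calc f x * f y = (f x ^ (1 / 2 : ℝ) * f y ^ (1 - 1 / 2 : ℝ)) ^ 2 := by
        rw [mul_pow, ← rpow_natCast, ← rpow_natCast, ← rpow_mul hx, ← rpow_mul hy]
        norm_num
    _ ≤ f ((1 / 2 : ℝ) • x + (1 - 1 / 2 : ℝ) • y) ^ 2 := by
        gcongr
        exact hf.2 x y (1 / 2) (by norm_num) (by norm_num)
    _ = f (midpoint ℝ x y) ^ 2 := by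
        rw [midpoint_eq_smul_add, smul_add]
        norm_num

lemma IsLogConcaveFn.continuousOn_interior {V : Type*} [NormedAddCommGroup V] [NormedSpace ℝ V]
    [FiniteDimensional ℝ V] {f : V → ℝ} (hf : IsLogConcaveFn f) :
    ContinuousOn f (interior {x | 0 < f x}) :=
  hf.concaveOn_log.continuousOn_interior.rexp.congr fun _ hx =>
    (exp_log (interior_subset (s := {x | 0 < f x}) hx)).symm

lemma IsLogConcaveFn.ae_eq_indicator_interior {f : E → ℝ} (hf : IsLogConcaveFn f) :
    f =ᵐ[volume] (interior {x | 0 < f x}).indicator f := by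
  have h_frontier := hf.concaveOn_log.1.addHaar_frontier volume
  filter_upwards [compl_mem_ae_iff.2 h_frontier] with x hx
  by_cases h : x ∈ interior {x | 0 < f x}
  · rw [Set.indicator_of_mem h]
  · have h_nonpos : ¬ 0 < f x := fun h_pos => hx ⟨subset_closure h_pos, h⟩
    rw [Set.indicator_of_notMem h]
    exact le_antisymm (not_lt.1 h_nonpos) (hf.1 x)

/- A log-concave function need not be measurable on the boundary of its support, so the density is
first replaced by its restriction to the interior. -/
lemma IsLogConcaveFn.prekopaLeindler_withDensity {f : E → ℝ} (hf : IsLogConcaveFn f) :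
    PrekopaLeindler ((volume : Measure E).withDensity fun x => ENNReal.ofReal (f x)) := by
  set U := interior {x | 0 < f x}
  have h_meas : Measurable (U.indicator f) := by
    classical
    rw [← Set.piecewise_eq_indicator]
    exact hf.continuousOn_interior.measurable_piecewise continuousOn_const
      isOpen_interior.measurableSet
  rw [withDensity_congr_ae (f := fun x => ENNReal.ofReal (f x))
    (hf.ae_eq_indicator_interior.fun_comp ENNReal.ofReal)]
  refine (prekopaLeindler_volume E).withDensity h_meas.ennreal_ofReal fun x y => ?_
  rw [mul_one, one_mul]
  by_cases hx : x ∈ U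
  swap
  · simp [hx]
  by_cases hy : y ∈ U
  swap
  · simp [hy]
  have h_mid : midpoint ℝ x y ∈ U := hf.concaveOn_log.1.interior.midpoint_mem hx hy
  simp only [Set.indicator_of_mem hx, Set.indicator_of_mem hy,
    Set.indicator_of_mem h_mid]
  rw [← ENNReal.ofReal_mul (hf.1 x), ← ENNReal.ofReal_pow (hf.1 _)]
  exact ENNReal.ofReal_le_ofReal (hf.mul_le_midpoint_sq x y)

end LogConcave

/-! ### Gaussian matrices -/

section Gaussian

lemma gaussianPDFReal_mul_gaussianPDFReal (x y : ℝ) :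
    gaussianPDFReal 0 1 x * gaussianPDFReal 0 1 y * exp ((x - y) ^ 2 / 4) =
      gaussianPDFReal 0 1 (midpoint ℝ x y) ^ 2 := by
  simp only [gaussianPDFReal]
  rw [mul_pow, ← exp_nat_mul, mul_mul_mul_comm, ← sq, mul_assoc, mul_assoc, ← exp_add, ← exp_add]
  congr 2
  simp only [sub_zero, NNReal.coe_one, mul_one, Nat.cast_ofNat, midpoint_eq_smul_add, invOf_eq_inv,
    smul_eq_mul]
  ring

lemma prekopaLeindlerWith_gaussianReal :
    PrekopaLeindlerWith (gaussianReal 0 1) fun x y => ENNReal.ofReal (exp ((x - y) ^ 2 / 4)) := by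
  rw [gaussianReal_of_var_ne_zero _ one_ne_zero]
  refine prekopaLeindler_volume_real.withDensity (measurable_gaussianPDF _ _) fun x y => ?_
  have hx := gaussianPDFReal_nonneg 0 1 x
  have hy := gaussianPDFReal_nonneg 0 1 y
  simp only [gaussianPDF, one_mul]
  rw [← ENNReal.ofReal_mul hx, ← ENNReal.ofReal_mul (mul_nonneg hx hy),
    ← ENNReal.ofReal_pow (gaussianPDFReal_nonneg _ _ _), gaussianPDFReal_mul_gaussianPDFReal]

variable {E : Type*} [NormedAddCommGroup E] [InnerProductSpace ℝ E] [FiniteDimensional ℝ E]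
  [MeasurableSpace E] [BorelSpace E] {k : ℕ} {N : ℝ}

lemma ofReal_exp_sum {ι : Type*} (s : Finset ι) (f : ι → ℝ) :
    ENNReal.ofReal (exp (∑ i ∈ s, f i)) = ∏ i ∈ s, ENNReal.ofReal (exp (f i)) := by
  rw [exp_sum, ENNReal.ofReal_prod_of_nonneg fun _ _ => (exp_pos _).le]

variable (E) in
lemma prekopaLeindlerWith_stdGaussian :
    PrekopaLeindlerWith (stdGaussian E) fun x y => ENNReal.ofReal (exp (‖x - y‖ ^ 2 / 4)) := by
  have h_euclidean : PrekopaLeindlerWith (stdGaussian (EuclideanSpace ℝ (Fin (Module.finrank ℝ E))))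
      fun x y => ENNReal.ofReal (exp (‖x - y‖ ^ 2 / 4)) := by
    rw [← map_pi_eq_stdGaussian]
    refine (prekopaLeindlerWith_gaussianReal.pi _).map
      (f := (WithLp.linearEquiv 2 ℝ _).symm.toLinearMap) (by fun_prop) fun x y => ?_
    rw [← ofReal_exp_sum, ← Finset.sum_div, EuclideanSpace.norm_sq_eq]
    simp
  let b := (stdOrthonormalBasis ℝ E).repr.symm
  rw [← stdGaussian_map b]
  exact h_euclidean.map (f := b.toLinearEquiv.toLinearMap) b.continuous.measurable fun x y => by
    simp [← map_sub]

variable (E k) in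
/-- The law of a `k`-row matrix whose rows are independent standard Gaussian vectors of `E`. -/
def gaussianRows : Measure (Fin k → E) :=
  Measure.pi fun _ => stdGaussian E

instance : IsProbabilityMeasure (gaussianRows E k) := by
  unfold gaussianRows
  infer_instance

variable (E k) in
lemma prekopaLeindlerWith_gaussianRows :
    PrekopaLeindlerWith (gaussianRows E k)
      fun x y => ENNReal.ofReal (exp ((∑ i, ‖x i - y i‖ ^ 2) / 4)) := by
  simpa only [gaussianRows, ← ofReal_exp_sum, ← Finset.sum_div] using
    (prekopaLeindlerWith_stdGaussian E).pi k

lemma exp_mul_gaussianPDFReal (hN : 0 < N) {v : ℝ≥0} (hv : v ≠ 0) (a x : ℝ) :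
    gaussianPDFReal 0 v x * exp (-(a - x) ^ 2 / (2 * N)) =
      √(N / (N + v)) * exp (-a ^ 2 / (2 * (N + v))) *
        gaussianPDFReal (a * v / (N + v)) (N * v / (N + v)).toNNReal x := by
  simp only [gaussianPDFReal]
  rw [coe_toNNReal _ (by positivity), mul_assoc, ← exp_add, mul_mul_mul_comm, ← exp_add]
  congr 1
  · rw [← sqrt_inv, ← sqrt_inv, ← sqrt_mul (by positivity)]
    congr 1
    field_simp
  · congr 1
    field_simp
    ring

lemma lintegral_exp_gaussianReal (hN : 0 < N) (a : ℝ) (v : ℝ≥0) :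
    ∫⁻ x, ENNReal.ofReal (exp (-(a - x) ^ 2 / (2 * N))) ∂(gaussianReal 0 v) =
      ENNReal.ofReal (√(N / (N + v)) * exp (-a ^ 2 / (2 * (N + v)))) := by
  rcases eq_or_ne v 0 with rfl | hv
  · rw [gaussianReal_zero_var, lintegral_dirac' _ (by fun_prop)]
    simp [hN.ne']
  have hw : (N * v / (N + v)).toNNReal ≠ 0 := (toNNReal_pos.2 (by positivity)).ne'
  calc _ = ∫⁻ x, gaussianPDF 0 v x * ENNReal.ofReal (exp (-(a - x) ^ 2 / (2 * N))) := by
        rw [gaussianReal_of_var_ne_zero _ hv, lintegral_withDensity_eq_lintegral_mul _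
          (measurable_gaussianPDF _ _) (by fun_prop)]
        rfl
    _ = ∫⁻ x, ENNReal.ofReal (√(N / (N + v)) * exp (-a ^ 2 / (2 * (N + v)))) *
          gaussianPDF (a * v / (N + v)) (N * v / (N + v)).toNNReal x := by
        refine lintegral_congr fun x => ?_
        rw [gaussianPDF, gaussianPDF, ← ENNReal.ofReal_mul (gaussianPDFReal_nonneg _ _ _),
          ← ENNReal.ofReal_mul (by positivity), exp_mul_gaussianPDFReal hN hv]
    _ = _ := by
        rw [lintegral_const_mul _ (measurable_gaussianPDF _ _),
          lintegral_gaussianPDF_eq_one _ hw, mul_one]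

lemma map_inner_stdGaussian (y : E) :
    (stdGaussian E).map (fun g => ⟪g, y⟫) = gaussianReal 0 (‖y‖ ^ 2).toNNReal := by
  have h_law := IsGaussian.map_eq_gaussianReal (μ := stdGaussian E) (innerSL ℝ y)
  rw [integral_strongDual_stdGaussian, variance_dual_stdGaussian] at h_law
  simpa [real_inner_comm] using h_law

lemma lintegral_exp_stdGaussian (hN : 0 < N) (a : ℝ) (y : E) :
    ∫⁻ g, ENNReal.ofReal (exp (-(a - ⟪g, y⟫) ^ 2 / (2 * N))) ∂(stdGaussian E) =
      ENNReal.ofReal (√(N / (N + ‖y‖ ^ 2)) * exp (-a ^ 2 / (2 * (N + ‖y‖ ^ 2)))) := by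
  rw [← lintegral_map (f := fun x => ENNReal.ofReal (exp (-(a - x) ^ 2 / (2 * N))))
    (g := fun g => ⟪g, y⟫) (by fun_prop) (by fun_prop), map_inner_stdGaussian,
    lintegral_exp_gaussianReal hN, coe_toNNReal _ (by positivity)]

lemma lintegral_pi_prod {ι α : Type*} [Fintype ι] [MeasurableSpace α] (μ : Measure α)
    [IsProbabilityMeasure μ] {f : ι → α → ℝ≥0∞} (hf : ∀ i, Measurable (f i)) :
    ∫⁻ x, ∏ i, f i (x i) ∂(Measure.pi fun _ : ι => μ) = ∏ i, ∫⁻ x, f i x ∂μ := by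
  have h_indep : iIndepFun (fun i (x : ι → α) => f i (x i)) (Measure.pi fun _ : ι => μ) :=
    iIndepFun_pi fun i => (hf i).aemeasurable
  rw [lintegral_prod_eq_prod_lintegral_of_indepFun _ _ h_indep fun i => by fun_prop]
  exact Finset.prod_congr rfl fun i _ =>
    (measurePreserving_eval (fun _ : ι => μ) i).lintegral_comp (hf i)

lemma lintegral_exp_gaussianRows (hN : 0 < N) (a : Fin k → ℝ) (y : E) :
    ∫⁻ g, ENNReal.ofReal (exp (-(∑ i, (a i - ⟪g i, y⟫) ^ 2) / (2 * N))) ∂(gaussianRows E k) =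
      ENNReal.ofReal (√(N / (N + ‖y‖ ^ 2)) ^ k * exp (-(∑ i, a i ^ 2) / (2 * (N + ‖y‖ ^ 2)))) := by
  have h_prod : ∀ (b : Fin k → ℝ) (M : ℝ), ENNReal.ofReal (exp (-(∑ i, b i ^ 2) / (2 * M))) =
      ∏ i, ENNReal.ofReal (exp (-b i ^ 2 / (2 * M))) := fun b M => by
    rw [← ofReal_exp_sum, ← Finset.sum_div, Finset.sum_neg_distrib]
  simp_rw [h_prod fun i => a i - ⟪_, y⟫]
  rw [gaussianRows, lintegral_pi_prod (stdGaussian E)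
    (f := fun i g => ENNReal.ofReal (exp (-(a i - ⟪g, y⟫) ^ 2 / (2 * N)))) fun i => by fun_prop]
  simp_rw [lintegral_exp_stdGaussian hN, ENNReal.ofReal_mul (sqrt_nonneg _)]
  rw [Finset.prod_mul_distrib, Finset.prod_const, Finset.card_univ, Fintype.card_fin,
    ENNReal.ofReal_mul (by positivity), ENNReal.ofReal_pow (sqrt_nonneg _), h_prod]

end Gaussian

/-! ### Gaussian-smoothed marginals -/

lemma lintegral_comp_smul {V : Type*} [NormedAddCommGroup V] [NormedSpace ℝ V] [MeasurableSpace V]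
    [BorelSpace V] [FiniteDimensional ℝ V] (μ : Measure V) [μ.IsAddHaarMeasure] {g : V → ℝ≥0∞}
    (hg : Measurable g) {r : ℝ} (hr : 0 < r) :
    ∫⁻ z, g (r • z) ∂μ = ENNReal.ofReal (r⁻¹ ^ Module.finrank ℝ V) * ∫⁻ z, g z ∂μ := by
  rw [← lintegral_map hg (measurable_const_smul r), Measure.map_addHaar_smul μ hr.ne',
    lintegral_smul_measure, smul_eq_mul, abs_of_pos (by positivity), inv_pow]

lemma lintegral_comp_midpoint {V : Type*} [NormedAddCommGroup V] [NormedSpace ℝ V]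
    [MeasurableSpace V] [BorelSpace V] [FiniteDimensional ℝ V] (μ : Measure V)
    [μ.IsAddHaarMeasure] {g : V → ℝ≥0∞} (hg : Measurable g) (x : V) :
    ∫⁻ z, g (midpoint ℝ x z) ∂μ = 2 ^ Module.finrank ℝ V * ∫⁻ z, g z ∂μ := by
  simp_rw [midpoint_eq_smul_add]
  rw [lintegral_add_left_eq_self (μ := μ) (fun z => g ((⅟2 : ℝ) • z)) x,
    lintegral_comp_smul μ hg (by norm_num), ENNReal.ofReal_pow (by norm_num)]
  norm_num

lemma sq_lintegral_le {α : Type*} [MeasurableSpace α] (μ : Measure α) {f : α → ℝ≥0∞}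
    (hf : Measurable f) : (∫⁻ x, f x ∂μ) ^ 2 ≤ (∫⁻ x, f x ^ 2 ∂μ) * μ Set.univ := by
  have h_holder := ENNReal.lintegral_mul_le_Lp_mul_Lq μ Real.HolderConjugate.two_two
    hf.aemeasurable (g := fun _ => 1) aemeasurable_const
  simp only [Pi.mul_apply, mul_one, lintegral_const, ENNReal.rpow_two, one_pow, one_mul]
    at h_holder
  calc (∫⁻ x, f x ∂μ) ^ 2 ≤ _ := pow_le_pow_left' h_holder 2
    _ = _ := by rw [mul_pow, ennreal_rpow_half_sq, ennreal_rpow_half_sq]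

section SmoothedMarginal

variable {E : Type*} [NormedAddCommGroup E] [InnerProductSpace ℝ E] {k : ℕ}

/-- The squared distance from `x` to the image of `y` under the matrix with rows `Γ i`. -/
def residualSq (Γ : Fin k → E) (x : Fin k → ℝ) (y : E) : ℝ :=
  ∑ i, (x i - ⟪Γ i, y⟫) ^ 2

/-- The unnormalised Gaussian kernel of variance `N` at the residual `x - Γ y`. -/
def smoothingKernel (N : ℝ) (Γ : Fin k → E) (x : Fin k → ℝ) (y : E) : ℝ≥0∞ :=
  ENNReal.ofReal (exp (-residualSq Γ x y / (2 * N)))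

/-- The unnormalised density at `x` of `Γ Y + √N G`, where `Y` has law `ν` and `G` is an independent
standard Gaussian vector. -/
def smoothedMarginal [MeasurableSpace E] (N : ℝ) (ν : Measure E) (Γ : Fin k → E)
    (x : Fin k → ℝ) : ℝ≥0∞ :=
  ∫⁻ y, smoothingKernel N Γ x y ∂ν

/-- The total mass of the unnormalised Gaussian kernel of variance `N` in `k` dimensions. -/
def kernelMass (k : ℕ) (N : ℝ) : ℝ≥0∞ :=
  ∫⁻ z : Fin k → ℝ, ENNReal.ofReal (exp (-(∑ i, z i ^ 2) / (2 * N)))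

lemma residualSq_nonneg (Γ : Fin k → E) (x : Fin k → ℝ) (y : E) : 0 ≤ residualSq Γ x y :=
  Finset.sum_nonneg fun _ _ => sq_nonneg _

lemma residualSq_neg_neg (Γ : Fin k → E) (x : Fin k → ℝ) (y : E) :
    residualSq Γ (-x) (-y) = residualSq Γ x y := by
  refine Finset.sum_congr rfl fun i _ => ?_
  rw [Pi.neg_apply, inner_neg_right]
  ring

lemma residualSq_midpoint_le (Γ : Fin k → E) (x x' : Fin k → ℝ) (y y' : E) {θ : ℝ} (hθ : 0 < θ) :
    residualSq Γ (midpoint ℝ x x') (midpoint ℝ y y') ≤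
      (1 + θ) / 4 * residualSq Γ x y + (1 + 1 / θ) / 4 * residualSq Γ x' y' := by
  simp only [residualSq, Finset.mul_sum, ← Finset.sum_add_distrib]
  refine Finset.sum_le_sum fun i _ => ?_
  have h_mid : midpoint ℝ x x' i - ⟪Γ i, midpoint ℝ y y'⟫ =
      ((x i - ⟪Γ i, y⟫) + (x' i - ⟪Γ i, y'⟫)) / 2 := by
    simp only [midpoint_eq_smul_add, invOf_eq_inv, Pi.smul_apply, Pi.add_apply, smul_eq_mul,
      inner_smul_right, inner_add_right]
    ring
  rw [h_mid]
  generalize x i - ⟪Γ i, y⟫ = a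
  generalize x' i - ⟪Γ i, y'⟫ = b
  have h_gap : (1 + θ) / 4 * a ^ 2 + (1 + 1 / θ) / 4 * b ^ 2 - ((a + b) / 2) ^ 2 =
      (θ * a - b) ^ 2 / θ / 4 := by
    field_simp
    ring
  have h_nonneg : 0 ≤ (θ * a - b) ^ 2 / θ := by positivity
  linarith

lemma smoothingKernel_mul_le {N : ℝ} (hN : 0 < N) (Γ : Fin k → E) (x x' : Fin k → ℝ) (y y' : E) :
    smoothingKernel N Γ x y * smoothingKernel N Γ x' y' ≤
      smoothingKernel N Γ (midpoint ℝ x x') (midpoint ℝ y y') ^ 2 := by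
  unfold smoothingKernel
  rw [← ENNReal.ofReal_mul (by positivity), ← ENNReal.ofReal_pow (by positivity), ← exp_add,
    ← exp_nat_mul, ← add_div, mul_div_assoc']
  gcongr
  have h := residualSq_midpoint_le Γ x x' y y' one_pos
  push_cast
  linarith

lemma smoothingKernel_mono {N N' : ℝ} (hN : 0 < N) (hNN' : N ≤ N') (Γ : Fin k → E)
    (x : Fin k → ℝ) (y : E) : smoothingKernel N Γ x y ≤ smoothingKernel N' Γ x y := by
  unfold smoothingKernel
  simp only [neg_div]
  have := residualSq_nonneg Γ x y
  gcongr

lemma lintegral_smoothingKernel (N : ℝ) (Γ : Fin k → E) (y : E) :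
    ∫⁻ z, smoothingKernel N Γ z y = kernelMass k N := by
  rw [← lintegral_add_right_eq_self (μ := (volume : Measure (Fin k → ℝ)))
    (fun z => smoothingKernel N Γ z y) fun i => ⟪Γ i, y⟫]
  simp [smoothingKernel, residualSq, kernelMass]

lemma two_pow_mul_kernelMass_div_four (k : ℕ) (N : ℝ) :
    2 ^ k * kernelMass k (N / 4) = kernelMass k N := by
  have h := lintegral_comp_midpoint volume (g := fun z : Fin k → ℝ =>
    ENNReal.ofReal (exp (-(∑ i, z i ^ 2) / (2 * (N / 4))))) (by fun_prop) 0
  rw [Module.finrank_fin_fun] at h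
  rw [kernelMass, ← h, kernelMass]
  refine lintegral_congr fun z => ?_
  simp only [midpoint_eq_smul_add, invOf_eq_inv, zero_add, Pi.smul_apply, smul_eq_mul, mul_pow,
    ← Finset.mul_sum]
  congr 2
  ring

lemma kernelMass_ne_zero (k : ℕ) (N : ℝ) : kernelMass k N ≠ 0 := by
  refine ((lintegral_pos_iff_support (by fun_prop)).2 ?_).ne'
  have h_support : (Function.support fun z : Fin k → ℝ =>
      ENNReal.ofReal (exp (-(∑ i, z i ^ 2) / (2 * N)))) = Set.univ := by
    ext z
    simp [exp_pos]
  rw [h_support]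
  exact isOpen_univ.measure_pos _ Set.univ_nonempty

lemma kernelMass_ne_top (k : ℕ) {N : ℝ} (hN : 0 < N) : kernelMass k N ≠ ∞ := by
  have h_int := Integrable.fintype_prod (ι := Fin k) (μ := fun _ => (volume : Measure ℝ))
    fun _ => integrable_exp_neg_mul_sq (b := (2 * N)⁻¹) (by positivity)
  refine ne_of_eq_of_ne ?_ h_int.lintegral_lt_top.ne
  refine lintegral_congr fun z => ?_
  simp_rw [← exp_sum, ← Finset.mul_sum]
  congr 2
  ring

@[fun_prop]
lemma measurable_residualSq [MeasurableSpace E] [BorelSpace E] [SecondCountableTopology E]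
    {α : Type*} [MeasurableSpace α] {Γ : α → Fin k → E} {x : α → Fin k → ℝ} {y : α → E}
    (hΓ : Measurable Γ) (hx : Measurable x) (hy : Measurable y) :
    Measurable fun a => residualSq (Γ a) (x a) (y a) := by
  unfold residualSq
  fun_prop

@[fun_prop]
lemma measurable_smoothingKernel [MeasurableSpace E] [BorelSpace E] [SecondCountableTopology E]
    {α : Type*} [MeasurableSpace α] {N : ℝ} {Γ : α → Fin k → E} {x : α → Fin k → ℝ} {y : α → E}
    (hΓ : Measurable Γ) (hx : Measurable x) (hy : Measurable y) :
    Measurable fun a => smoothingKernel N (Γ a) (x a) (y a) := by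
  unfold smoothingKernel
  fun_prop

variable [MeasurableSpace E] [BorelSpace E] [SecondCountableTopology E] {N : ℝ} {ν : Measure E}

@[fun_prop]
lemma measurable_smoothedMarginal [SFinite ν] {α : Type*} [MeasurableSpace α] {Γ : α → Fin k → E}
    {x : α → Fin k → ℝ} (hΓ : Measurable Γ) (hx : Measurable x) :
    Measurable fun a => smoothedMarginal N ν (Γ a) (x a) := by
  unfold smoothedMarginal
  exact Measurable.lintegral_prod_right'
    (f := fun z : α × E => smoothingKernel N (Γ z.1) (x z.1) z.2) (by fun_prop)

omit [SecondCountableTopology E] in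
lemma smoothedMarginal_neg [ν.IsNegInvariant] (Γ : Fin k → E) (x : Fin k → ℝ) :
    smoothedMarginal N ν Γ (-x) = smoothedMarginal N ν Γ x := by
  rw [smoothedMarginal, ← lintegral_neg_eq_self]
  simp only [smoothingKernel, residualSq_neg_neg, smoothedMarginal]

lemma smoothedMarginal_mul_le (hN : 0 < N) (hν : PrekopaLeindler ν) (Γ : Fin k → E)
    (x x' : Fin k → ℝ) :
    smoothedMarginal N ν Γ x * smoothedMarginal N ν Γ x' ≤
      smoothedMarginal N ν Γ (midpoint ℝ x x') ^ 2 := by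
  refine hν _ _ _ (by fun_prop) (by fun_prop) (by fun_prop) fun y y' => ?_
  rw [one_mul]
  exact smoothingKernel_mul_le hN Γ x x' y y'

lemma smoothedMarginal_le_zero (hN : 0 < N) (hν : PrekopaLeindler ν) [ν.IsNegInvariant]
    (Γ : Fin k → E) (x : Fin k → ℝ) : smoothedMarginal N ν Γ x ≤ smoothedMarginal N ν Γ 0 := by
  have h := smoothedMarginal_mul_le hN hν Γ x (-x)
  rw [smoothedMarginal_neg, midpoint_self_neg, ← sq] at h
  exact (ENNReal.pow_le_pow_left_iff two_ne_zero).1 h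

lemma lintegral_mul_sq_le_smoothedMarginal_zero (hN : 0 < N) [SFinite ν] (hν : PrekopaLeindler ν)
    [ν.IsNegInvariant] (Γ : Fin k → E) (x : Fin k → ℝ) {U : E → ℝ≥0∞}
    {V W : (Fin k → ℝ) → E → ℝ≥0∞} (hU : Measurable U) (hV : Measurable (Function.uncurry V))
    (hW : Measurable (Function.uncurry W)) (hVK : ∀ z y, V z y ≤ smoothingKernel N Γ z y)
    (h : ∀ y z y', U y * V z y' ≤ W (midpoint ℝ x z) (midpoint ℝ y y') ^ 2) :
    (∫⁻ y, U y ∂ν) * (∫⁻ z, ∫⁻ y, V z y ∂ν) ^ 2 ≤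
      smoothedMarginal N ν Γ 0 * (2 ^ k * ∫⁻ z, ∫⁻ y, W z y ∂ν) ^ 2 := by
  set u := ∫⁻ y, U y ∂ν
  set f := smoothedMarginal N ν Γ 0
  have h_fiber : ∀ z, u * (∫⁻ y, V z y ∂ν) ≤ (∫⁻ y, W (midpoint ℝ x z) y ∂ν) ^ 2 := fun z =>
    hν _ _ _ hU hV.of_uncurry_left hW.of_uncurry_left fun y y' => by
      rw [one_mul]
      exact h y z y'
  have h_sqrt : ∀ z, u ^ (1 / 2 : ℝ) * (∫⁻ y, V z y ∂ν) ≤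
      f ^ (1 / 2 : ℝ) * ∫⁻ y, W (midpoint ℝ x z) y ∂ν := by
    intro z
    have hV_le : ∫⁻ y, V z y ∂ν ≤ f :=
      (lintegral_mono (hVK z)).trans (smoothedMarginal_le_zero hN hν Γ z)
    refine (ENNReal.pow_le_pow_left_iff two_ne_zero).1 ?_
    rw [mul_pow, mul_pow, ennreal_rpow_half_sq, ennreal_rpow_half_sq, sq (∫⁻ y, V z y ∂ν),
      ← mul_assoc, mul_comm]
    exact mul_le_mul' hV_le (h_fiber z)
  have hVi : Measurable fun z => ∫⁻ y, V z y ∂ν := hV.lintegral_prod_right'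
  have hWi : Measurable fun z => ∫⁻ y, W z y ∂ν := hW.lintegral_prod_right'
  have h_meas_mid : Measurable fun z => midpoint ℝ x z := by
    simp_rw [midpoint_eq_smul_add]
    fun_prop
  have hWi_mid : Measurable fun z => ∫⁻ y, W (midpoint ℝ x z) y ∂ν := hWi.comp h_meas_mid
  have h_integrated : u ^ (1 / 2 : ℝ) * (∫⁻ z, ∫⁻ y, V z y ∂ν) ≤
      f ^ (1 / 2 : ℝ) * (2 ^ k * ∫⁻ z, ∫⁻ y, W z y ∂ν) := by
    have h_mid := lintegral_comp_midpoint volume hWi x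
    rw [Module.finrank_fin_fun] at h_mid
    rw [← h_mid, ← lintegral_const_mul _ hVi, ← lintegral_const_mul _ hWi_mid]
    exact lintegral_mono h_sqrt
  have h_sq := pow_le_pow_left' h_integrated 2
  rwa [mul_pow, mul_pow, ennreal_rpow_half_sq, ennreal_rpow_half_sq] at h_sq

lemma lintegral_lintegral_smoothingKernel_mul [SFinite ν] (Γ : Fin k → E) {w : E → ℝ≥0∞}
    (hw : Measurable w) :
    ∫⁻ z, ∫⁻ y, smoothingKernel N Γ z y * w y ∂ν = kernelMass k N * ∫⁻ y, w y ∂ν := by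
  rw [lintegral_lintegral_swap (by unfold Function.uncurry; fun_prop),
    ← lintegral_const_mul _ hw]
  refine lintegral_congr fun y => ?_
  rw [lintegral_mul_const _ (by fun_prop), lintegral_smoothingKernel]

end SmoothedMarginal

/-! ### Radial moments and the tilted measure -/

section TiltedMeasure

variable {E : Type*} [NormedAddCommGroup E] [InnerProductSpace ℝ E] [MeasurableSpace E]
  [BorelSpace E] [SecondCountableTopology E] {k : ℕ} {N : ℝ} {ν : Measure E}

/-- The `d`-th moment of the smoothed marginal along the ray spanned by `e`. -/
def radialMoment (N : ℝ) (ν : Measure E) (Γ : Fin k → E) (e : Fin k → ℝ) (d : ℕ) : ℝ≥0∞ :=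
  ∫⁻ r : ℝ, ENNReal.ofReal r ^ d * smoothedMarginal N ν Γ (r • e)

/-- The measure on pairs `(r, y)` whose total mass is the radial moment. -/
def tiltedMeasure (N : ℝ) (ν : Measure E) (Γ : Fin k → E) (e : Fin k → ℝ) (d : ℕ) :
    Measure (ℝ × E) :=
  (volume.prod ν).withDensity fun z => ENNReal.ofReal z.1 ^ d * smoothingKernel N Γ (z.1 • e) z.2

@[fun_prop]
lemma measurable_radialMoment [SFinite ν] {α : Type*} [MeasurableSpace α] {Γ : α → Fin k → E}
    {e : α → Fin k → ℝ} {d : ℕ} (hΓ : Measurable Γ) (he : Measurable e) :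
    Measurable fun a => radialMoment N ν (Γ a) (e a) d := by
  unfold radialMoment
  exact Measurable.lintegral_prod_right' (f := fun z : α × ℝ =>
    ENNReal.ofReal z.2 ^ d * smoothedMarginal N ν (Γ z.1) (z.2 • e z.1)) (by fun_prop)

lemma lintegral_tiltedMeasure [SFinite ν] (Γ : Fin k → E) (e : Fin k → ℝ) (d : ℕ)
    {w : ℝ × E → ℝ≥0∞} (hw : Measurable w) :
    ∫⁻ z, w z ∂tiltedMeasure N ν Γ e d =
      ∫⁻ r : ℝ, ENNReal.ofReal r ^ d * ∫⁻ y, smoothingKernel N Γ (r • e) y * w (r, y) ∂ν := by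
  rw [tiltedMeasure, lintegral_withDensity_eq_lintegral_mul _ (by fun_prop) hw,
    lintegral_prod _ (by fun_prop)]
  refine lintegral_congr fun r => ?_
  rw [← lintegral_const_mul _ (by fun_prop)]
  simp only [Pi.mul_apply, mul_assoc]

lemma tiltedMeasure_univ [SFinite ν] (Γ : Fin k → E) (e : Fin k → ℝ) (d : ℕ) :
    tiltedMeasure N ν Γ e d Set.univ = radialMoment N ν Γ e d := by
  rw [← lintegral_one, lintegral_tiltedMeasure Γ e d measurable_const]
  simp only [mul_one, radialMoment, smoothedMarginal]

lemma lintegral_ofReal_pow_mul_smoothedMarginal_midpoint [SFinite ν] (Γ : Fin k → E)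
    (e : Fin k → ℝ) (d : ℕ) :
    ∫⁻ r : ℝ, ENNReal.ofReal r ^ d * smoothedMarginal N ν Γ (midpoint ℝ 0 (r • e)) =
      2 ^ (d + 1) * radialMoment N ν Γ e d := by
  have h_scale : ∀ r : ℝ, ENNReal.ofReal r = 2 * ENNReal.ofReal (midpoint ℝ 0 r) := by
    intro r
    rw [midpoint_eq_smul_add, ← ENNReal.ofReal_ofNat, ← ENNReal.ofReal_mul zero_le_two]
    congr 1
    simp
  have h_mid := lintegral_comp_midpoint volume
    (g := fun s : ℝ => ENNReal.ofReal s ^ d * smoothedMarginal N ν Γ (s • e)) (by fun_prop) 0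
  rw [Module.finrank_self, pow_one] at h_mid
  rw [pow_succ, mul_assoc, radialMoment, ← h_mid,
    ← lintegral_const_mul' _ _ (ENNReal.pow_ne_top ENNReal.ofNat_ne_top)]
  refine lintegral_congr fun r => ?_
  have h_smul : midpoint ℝ 0 (r • e) = midpoint ℝ 0 r • e := by
    simp [midpoint_eq_smul_add, mul_smul]
  rw [h_scale r, mul_pow, h_smul, mul_assoc]

lemma lintegral_smoothingKernel_mul_le (hN : 0 < N) [SFinite ν] (hν : PrekopaLeindler ν)
    (Γ : Fin k → E) (x : Fin k → ℝ) {w : E → ℝ≥0∞} (hw : Measurable w) {C : ℝ≥0∞}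
    (h : ∫⁻ y, smoothingKernel N Γ x y * w y ^ 2 ∂ν ≤ C ^ 2 * smoothedMarginal N ν Γ 0) :
    ∫⁻ y, smoothingKernel N Γ x y * w y ∂ν ≤ C * smoothedMarginal N ν Γ (midpoint ℝ 0 x) := by
  have h_cs := sq_lintegral_le (ν.withDensity (smoothingKernel N Γ x)) hw
  rw [lintegral_withDensity_eq_lintegral_mul _ (by fun_prop) hw,
    lintegral_withDensity_eq_lintegral_mul _ (by fun_prop) (by fun_prop),
    withDensity_apply _ MeasurableSet.univ, Measure.restrict_univ] at h_cs
  simp only [Pi.mul_apply] at h_cs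
  refine (ENNReal.pow_le_pow_left_iff two_ne_zero).1 ?_
  calc (∫⁻ y, smoothingKernel N Γ x y * w y ∂ν) ^ 2
      ≤ C ^ 2 * smoothedMarginal N ν Γ 0 * smoothedMarginal N ν Γ x := h_cs.trans (by gcongr; rfl)
    _ ≤ C ^ 2 * smoothedMarginal N ν Γ (midpoint ℝ 0 x) ^ 2 := by
        rw [mul_assoc]
        gcongr
        exact smoothedMarginal_mul_le hN hν Γ 0 x
    _ = _ := (mul_pow _ _ _).symm

lemma lintegral_tiltedMeasure_le (hN : 0 < N) [SFinite ν] (hν : PrekopaLeindler ν)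
    (Γ : Fin k → E) (e : Fin k → ℝ) (d : ℕ) {w : ℝ × E → ℝ≥0∞} (hw : Measurable w) {C : ℝ≥0∞}
    (h : ∀ r : ℝ, ∫⁻ y, smoothingKernel N Γ (r • e) y * w (r, y) ^ 2 ∂ν ≤
      C ^ 2 * smoothedMarginal N ν Γ 0) :
    ∫⁻ z, w z ∂tiltedMeasure N ν Γ e d ≤ C * 2 ^ (d + 1) * radialMoment N ν Γ e d := by
  have h_mid : Measurable fun r : ℝ => midpoint ℝ 0 (r • e) := by
    simp_rw [midpoint_eq_smul_add]
    fun_prop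
  rw [lintegral_tiltedMeasure Γ e d hw, mul_assoc,
    ← lintegral_ofReal_pow_mul_smoothedMarginal_midpoint, ← lintegral_const_mul _ (by fun_prop)]
  refine lintegral_mono fun r => ?_
  rw [mul_left_comm]
  gcongr
  exact lintegral_smoothingKernel_mul_le hN hν Γ _ (by fun_prop) (h r)

lemma lintegral_smoothingKernel_mul_exp_residualSq_le (hN : 0 < N) [IsProbabilityMeasure ν]
    (hν : PrekopaLeindler ν) [ν.IsNegInvariant] (Γ : Fin k → E) (x : Fin k → ℝ) :
    ∫⁻ y, smoothingKernel N Γ x y * ENNReal.ofReal (exp (residualSq Γ x y / (16 * N))) ^ 2 ∂ν ≤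
      (4 ^ k) ^ 2 * smoothedMarginal N ν Γ 0 := by
  have hN4 : 0 < N / 4 := by positivity
  have h_mass : ∀ N' : ℝ, ∫⁻ z, ∫⁻ y, smoothingKernel N' Γ z y ∂ν = kernelMass k N' := by
    intro N'
    have h_mul := lintegral_lintegral_smoothingKernel_mul (N := N') (ν := ν) Γ
      (w := fun _ => 1) measurable_const
    simpa only [mul_one, lintegral_one, measure_univ] using h_mul
  have h := lintegral_mul_sq_le_smoothedMarginal_zero hN hν Γ x
    (U := fun y => smoothingKernel N Γ x y *
      ENNReal.ofReal (exp (residualSq Γ x y / (16 * N))) ^ 2)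
    (V := smoothingKernel (N / 4) Γ) (W := smoothingKernel N Γ) (by fun_prop)
    (by unfold Function.uncurry; fun_prop) (by unfold Function.uncurry; fun_prop)
    (smoothingKernel_mono hN4 (by linarith) Γ) ?_
  · rw [h_mass, h_mass, ← two_pow_mul_kernelMass_div_four k N, ← mul_assoc, ← mul_pow,
      show (2 : ℝ≥0∞) * 2 = 4 by norm_num, mul_pow, ← mul_assoc,
      mul_comm (smoothedMarginal N ν Γ 0)] at h
    exact (ENNReal.mul_le_mul_iff_left (pow_ne_zero 2 (kernelMass_ne_zero k _))
      (ENNReal.pow_ne_top (kernelMass_ne_top k hN4))).1 h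
  · intro y z y'
    have h_mid := residualSq_midpoint_le Γ x z y y' one_half_pos
    have h_nonneg := residualSq_nonneg Γ z y'
    unfold smoothingKernel
    rw [← ENNReal.ofReal_pow (by positivity), ← ENNReal.ofReal_pow (by positivity),
      ← ENNReal.ofReal_mul (by positivity), ← ENNReal.ofReal_mul (by positivity), ← exp_nat_mul,
      ← exp_nat_mul, ← exp_add, ← exp_add]
    gcongr
    field_simp
    push_cast
    linarith

lemma lintegral_exp_residualSq_tiltedMeasure_le (hN : 0 < N) [IsProbabilityMeasure ν]
    (hν : PrekopaLeindler ν) [ν.IsNegInvariant] (Γ : Fin k → E) (e : Fin k → ℝ) (d : ℕ) :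
    ∫⁻ z, ENNReal.ofReal (exp (residualSq Γ (z.1 • e) z.2 / (16 * N))) ∂tiltedMeasure N ν Γ e d ≤
      4 ^ k * 2 ^ (d + 1) * radialMoment N ν Γ e d :=
  lintegral_tiltedMeasure_le hN hν Γ e d (by fun_prop) fun _ =>
    lintegral_smoothingKernel_mul_exp_residualSq_le hN hν Γ _

omit [SecondCountableTopology E] in
lemma one_le_two_mul_measure_inner_nonneg [IsProbabilityMeasure ν]
    [ν.IsNegInvariant] (v : E) : 1 ≤ 2 * ν {y | 0 ≤ ⟪v, y⟫} := by
  have h_neg : ν {y | ⟪v, y⟫ ≤ 0} = ν {y | 0 ≤ ⟪v, y⟫} := by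
    rw [← Measure.measure_neg]
    congr 1
    ext y
    simp
  have h_cover : (Set.univ : Set E) ⊆ {y | 0 ≤ ⟪v, y⟫} ∪ {y | ⟪v, y⟫ ≤ 0} :=
    fun y _ => le_total (0 : ℝ) ⟪v, y⟫
  have h_union := (measure_mono (μ := ν) h_cover).trans (measure_union_le _ _)
  rwa [measure_univ, h_neg, ← two_mul] at h_union

lemma lintegral_smoothingKernel_mul_inner_pow_le (hN : 0 < N) [IsProbabilityMeasure ν]
    (hν : PrekopaLeindler ν) [ν.IsNegInvariant] (Γ : Fin k → E) (x : Fin k → ℝ) (v : E) (m : ℕ) :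
    ∫⁻ y, smoothingKernel N Γ x y * (ENNReal.ofReal ⟪v, y⟫ ^ m) ^ 2 ∂ν ≤
      (2 ^ (k + m + 1) * ∫⁻ y, ENNReal.ofReal ⟪v, y⟫ ^ m ∂ν) ^ 2 * smoothedMarginal N ν Γ 0 := by
  set S : Set E := {y | 0 ≤ ⟪v, y⟫}
  have hS : MeasurableSet S := measurableSet_le (by fun_prop) (by fun_prop)
  have hS_meas : Measurable (S.indicator (1 : E → ℝ≥0∞)) := measurable_one.indicator hS
  have h := lintegral_mul_sq_le_smoothedMarginal_zero hN hν Γ x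
    (U := fun y => smoothingKernel N Γ x y * (ENNReal.ofReal ⟪v, y⟫ ^ m) ^ 2)
    (V := fun z y => smoothingKernel N Γ z y * S.indicator 1 y)
    (W := fun z y => smoothingKernel N Γ z y * (2 ^ m * ENNReal.ofReal ⟪v, y⟫ ^ m)) (by fun_prop)
    (by unfold Function.uncurry; fun_prop) (by unfold Function.uncurry; fun_prop)
    (fun z y => mul_le_of_le_one_right' (Set.indicator_le_self' (by simp) y)) ?_
  · rw [lintegral_lintegral_smoothingKernel_mul Γ hS_meas,
      lintegral_lintegral_smoothingKernel_mul Γ (by fun_prop), lintegral_indicator_one hS,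
      lintegral_const_mul _ (by fun_prop)] at h
    set I := ∫⁻ y, smoothingKernel N Γ x y * (ENNReal.ofReal ⟪v, y⟫ ^ m) ^ 2 ∂ν
    set J := ∫⁻ y, ENNReal.ofReal ⟪v, y⟫ ^ m ∂ν
    refine (ENNReal.mul_le_mul_iff_left (pow_ne_zero 2 (kernelMass_ne_zero k N))
      (ENNReal.pow_ne_top (kernelMass_ne_top k hN))).1 ?_
    calc I * kernelMass k N ^ 2 ≤ I * kernelMass k N ^ 2 * (2 * ν S) ^ 2 :=
          le_mul_of_one_le_right' (one_le_pow₀ (one_le_two_mul_measure_inner_nonneg v))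
      _ = 4 * (I * (kernelMass k N * ν S) ^ 2) := by ring
      _ ≤ 4 * (smoothedMarginal N ν Γ 0 * (2 ^ k * (kernelMass k N * (2 ^ m * J))) ^ 2) := by
          gcongr
      _ = (2 ^ (k + m + 1) * J) ^ 2 * smoothedMarginal N ν Γ 0 * kernelMass k N ^ 2 := by ring
  · intro y z y'
    by_cases hy' : y' ∈ S
    · rw [Set.indicator_of_mem hy', Pi.one_apply, mul_one, mul_pow, mul_right_comm]
      gcongr
      · exact smoothingKernel_mul_le hN Γ x z y y'
      rw [← mul_pow, ← ENNReal.ofReal_ofNat, ← ENNReal.ofReal_mul zero_le_two]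
      gcongr
      have : 0 ≤ ⟪v, y'⟫ := hy'
      simp only [midpoint_eq_smul_add, invOf_eq_inv, inner_smul_right, inner_add_right]
      linarith
    · rw [Set.indicator_of_notMem hy', mul_zero, mul_zero]
      exact zero_le

lemma lintegral_inner_pow_tiltedMeasure_le (hN : 0 < N) [IsProbabilityMeasure ν]
    (hν : PrekopaLeindler ν) [ν.IsNegInvariant] (Γ : Fin k → E) (e : Fin k → ℝ) (d : ℕ) (v : E)
    (m : ℕ) :
    ∫⁻ z, ENNReal.ofReal ⟪v, z.2⟫ ^ m ∂tiltedMeasure N ν Γ e d ≤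
      2 ^ (k + m + 1) * (∫⁻ y, ENNReal.ofReal ⟪v, y⟫ ^ m ∂ν) * 2 ^ (d + 1) *
        radialMoment N ν Γ e d :=
  lintegral_tiltedMeasure_le hN hν Γ e d (by fun_prop) fun _ =>
    lintegral_smoothingKernel_mul_inner_pow_le hN hν Γ _ v m

lemma ofReal_abs_pow_eq_add (a : ℝ) {m : ℕ} (hm : m ≠ 0) :
    ENNReal.ofReal |a| ^ m = ENNReal.ofReal a ^ m + ENNReal.ofReal (-a) ^ m := by
  rcases le_total 0 a with ha | ha
  · rw [abs_of_nonneg ha, ENNReal.ofReal_of_nonpos (neg_nonpos.2 ha), zero_pow hm, add_zero]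
  · rw [abs_of_nonpos ha, ENNReal.ofReal_of_nonpos ha, zero_pow hm, zero_add]

lemma lintegral_abs_inner_pow_tiltedMeasure_le (hN : 0 < N) [IsProbabilityMeasure ν]
    (hν : PrekopaLeindler ν) [ν.IsNegInvariant] (Γ : Fin k → E) (e : Fin k → ℝ) {d : ℕ}
    (hk : k ≠ 0) (hd : d + 1 ≤ 3 * k) (v : E) :
    ∫⁻ z, ENNReal.ofReal |⟪v, z.2⟫| ^ k ∂tiltedMeasure N ν Γ e d ≤
      64 ^ k * (∫⁻ y, ENNReal.ofReal |⟪v, y⟫| ^ k ∂ν) * radialMoment N ν Γ e d := by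
  have h_pos := lintegral_inner_pow_tiltedMeasure_le hN hν Γ e d v k
  have h_neg := lintegral_inner_pow_tiltedMeasure_le hN hν Γ e d (-v) k
  simp only [inner_neg_left] at h_neg
  simp_rw [ofReal_abs_pow_eq_add _ hk]
  rw [lintegral_add_left (by fun_prop), lintegral_add_left (by fun_prop)]
  have h_const : (2 : ℝ≥0∞) ^ (k + k + 1) * 2 ^ (d + 1) ≤ 64 ^ k := by
    rw [← pow_add, show (64 : ℝ≥0∞) = 2 ^ 6 by norm_num, ← pow_mul]
    exact pow_le_pow_right₀ one_le_two (by lia)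
  calc _ ≤ _ := add_le_add h_pos h_neg
    _ = 2 ^ (k + k + 1) * 2 ^ (d + 1) * (∫⁻ y, ENNReal.ofReal ⟪v, y⟫ ^ k ∂ν +
          ∫⁻ y, ENNReal.ofReal (-⟪v, y⟫) ^ k ∂ν) * radialMoment N ν Γ e d := by ring
    _ ≤ _ := by gcongr

end TiltedMeasure

lemma lintegral_sq_le_of_lintegral_pow_le {α : Type*} [MeasurableSpace α] {μ : Measure α}
    {f : α → ℝ} (hf : Measurable f) {C : ℝ} (hC : 0 < C) {k : ℕ} (hk : 2 ≤ k)
    (h : ∫⁻ x, ENNReal.ofReal |f x| ^ k ∂μ ≤ ENNReal.ofReal C ^ k * μ Set.univ) :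
    ∫⁻ x, ENNReal.ofReal (f x ^ 2) ∂μ ≤ ENNReal.ofReal (2 * C ^ 2) * μ Set.univ := by
  have h_pointwise : ∀ u : ℝ, u ^ 2 ≤ C ^ 2 + C ^ 2 * (C ^ k)⁻¹ * |u| ^ k := by
    intro u
    have hw : 0 ≤ |u| / C := by positivity
    have h_unit : (|u| / C) ^ 2 ≤ 1 + (|u| / C) ^ k := by
      rcases le_total (|u| / C) 1 with hw1 | hw1
      · linarith [pow_le_one₀ (n := 2) hw hw1, pow_nonneg hw k]
      · linarith [pow_le_pow_right₀ hw1 hk]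
    have h_scaled := mul_le_mul_of_nonneg_left h_unit (sq_nonneg C)
    rw [div_pow, div_pow, sq_abs, mul_div_cancel₀ _ (by positivity)] at h_scaled
    exact h_scaled.trans_eq (by ring)
  calc ∫⁻ x, ENNReal.ofReal (f x ^ 2) ∂μ
      ≤ ∫⁻ x, (ENNReal.ofReal (C ^ 2) +
          ENNReal.ofReal (C ^ 2 * (C ^ k)⁻¹) * ENNReal.ofReal |f x| ^ k) ∂μ := by
        refine lintegral_mono fun x => ?_
        rw [← ENNReal.ofReal_pow (abs_nonneg _), ← ENNReal.ofReal_mul (by positivity),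
          ← ENNReal.ofReal_add (by positivity) (by positivity)]
        exact ENNReal.ofReal_le_ofReal (h_pointwise _)
    _ ≤ ENNReal.ofReal (C ^ 2) * μ Set.univ +
          ENNReal.ofReal (C ^ 2 * (C ^ k)⁻¹) * (ENNReal.ofReal C ^ k * μ Set.univ) := by
        rw [lintegral_add_left (by fun_prop), lintegral_const, lintegral_const_mul _ (by fun_prop)]
        gcongr
    _ = _ := by
        rw [← ENNReal.ofReal_pow hC.le, ← mul_assoc, ← ENNReal.ofReal_mul (by positivity),
          ← add_mul, ← ENNReal.ofReal_add (by positivity) (by positivity), mul_assoc,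
          inv_mul_cancel₀ (by positivity), mul_one, two_mul]

lemma lintegral_ofReal_le_of_lintegral_exp_le {α : Type*} [MeasurableSpace α] {μ : Measure α}
    {f : α → ℝ} (hf : Measurable f) {s a : ℝ} (hs : 0 < s) (ha : 1 ≤ a)
    (h : ∫⁻ x, ENNReal.ofReal (exp (f x / s)) ∂μ ≤ ENNReal.ofReal (exp a) * μ Set.univ) :
    ∫⁻ x, ENNReal.ofReal (f x) ∂μ ≤ ENNReal.ofReal (s * a) * μ Set.univ := by
  have h_const : 0 ≤ s * (a - 1) := mul_nonneg hs.le (sub_nonneg.2 ha)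
  have h_pointwise : ∀ u : ℝ, u ≤ s * exp (-a) * exp (u / s) + s * (a - 1) := by
    intro u
    have h_exp := mul_le_mul_of_nonneg_left (add_one_le_exp (-a + u / s)) hs.le
    rw [exp_add, ← mul_assoc, mul_add, mul_add, mul_div_cancel₀ _ hs.ne'] at h_exp
    linarith
  calc ∫⁻ x, ENNReal.ofReal (f x) ∂μ
      ≤ ∫⁻ x, (ENNReal.ofReal (s * exp (-a)) * ENNReal.ofReal (exp (f x / s)) +
          ENNReal.ofReal (s * (a - 1))) ∂μ := by
        refine lintegral_mono fun x => ?_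
        rw [← ENNReal.ofReal_mul (by positivity), ← ENNReal.ofReal_add (by positivity) h_const]
        exact ENNReal.ofReal_le_ofReal (h_pointwise _)
    _ ≤ ENNReal.ofReal (s * exp (-a)) * (ENNReal.ofReal (exp a) * μ Set.univ) +
          ENNReal.ofReal (s * (a - 1)) * μ Set.univ := by
        rw [lintegral_add_left (by fun_prop), lintegral_const, lintegral_const_mul _ (by fun_prop)]
        gcongr
    _ = _ := by
        rw [← mul_assoc, ← ENNReal.ofReal_mul (by positivity), ← add_mul,
          ← ENNReal.ofReal_add (by positivity) h_const, mul_assoc s, ← exp_add, neg_add_cancel,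
          exp_zero]
        congr 2
        ring

lemma ofReal_exp_neg_mul_le_lintegral {α : Type*} [MeasurableSpace α] {μ : Measure α}
    [IsFiniteMeasure μ] {f : α → ℝ} (hf : Measurable f) (hf_nonneg : ∀ x, 0 ≤ f x) {c : ℝ}
    (hc : 0 ≤ c) (h : ∫⁻ x, ENNReal.ofReal (f x) ∂μ ≤ ENNReal.ofReal c * μ Set.univ) :
    ENNReal.ofReal (exp (-c)) * μ Set.univ ≤ ∫⁻ x, ENNReal.ofReal (exp (-f x)) ∂μ := by
  have h_pointwise : ∀ x, ENNReal.ofReal (exp (-c)) +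
      ENNReal.ofReal (exp (-c)) * ENNReal.ofReal c ≤
      ENNReal.ofReal (exp (-f x)) + ENNReal.ofReal (exp (-c)) * ENNReal.ofReal (f x) := by
    intro x
    have := hf_nonneg x
    rw [← ENNReal.ofReal_mul (by positivity), ← ENNReal.ofReal_mul (by positivity),
      ← ENNReal.ofReal_add (by positivity) (by positivity),
      ← ENNReal.ofReal_add (by positivity) (by positivity)]
    refine ENNReal.ofReal_le_ofReal ?_
    have h_tangent := mul_le_mul_of_nonneg_left (add_one_le_exp (c - f x)) (exp_pos (-c)).le
    rw [← exp_add, show -c + (c - f x) = -f x by ring] at h_tangent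
    linarith
  have h_integrated := lintegral_mono (μ := μ) h_pointwise
  rw [lintegral_const, lintegral_add_left (by fun_prop), lintegral_const_mul _ (by fun_prop),
    add_mul, mul_assoc _ (ENNReal.ofReal c)] at h_integrated
  refine ENNReal.le_of_add_le_add_right ?_ (h_integrated.trans (by gcongr))
  exact ENNReal.mul_ne_top ENNReal.ofReal_ne_top
    (ENNReal.mul_ne_top ENNReal.ofReal_ne_top (measure_ne_top μ _))

lemma lintegral_abs_pow_mul_exp_ne_top {N : ℝ} (hN : 0 < N) (d : ℕ) :
    ∫⁻ r : ℝ, ENNReal.ofReal |r| ^ d * ENNReal.ofReal (exp (-r ^ 2 / (2 * N))) ≠ ∞ := by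
  have h_int := integrable_rpow_mul_exp_neg_mul_sq (b := (2 * N)⁻¹) (by positivity) (s := d)
    (by linarith [d.cast_nonneg (α := ℝ)])
  refine ne_of_eq_of_ne (lintegral_congr fun r => ?_) h_int.norm.lintegral_lt_top.ne
  rw [← ENNReal.ofReal_pow (abs_nonneg _), ← ENNReal.ofReal_mul (by positivity), norm_mul,
    rpow_natCast, norm_pow, norm_eq_abs, norm_eq_abs, abs_exp]
  congr 3
  ring

lemma ofReal_abs_add_pow_le (a b : ℝ) (d : ℕ) : ENNReal.ofReal |a + b| ^ d ≤
    2 ^ (d - 1) * (ENNReal.ofReal |a| ^ d + ENNReal.ofReal |b| ^ d) := by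
  calc ENNReal.ofReal |a + b| ^ d ≤ ENNReal.ofReal (|a| + |b|) ^ d := by
        gcongr
        exact abs_add_le a b
    _ = ENNReal.ofReal ((|a| + |b|) ^ d) := (ENNReal.ofReal_pow (by positivity) d).symm
    _ ≤ ENNReal.ofReal (2 ^ (d - 1) * (|a| ^ d + |b| ^ d)) :=
        ENNReal.ofReal_le_ofReal (add_pow_le (abs_nonneg a) (abs_nonneg b) d)
    _ = _ := by
        rw [ENNReal.ofReal_mul (by positivity), ENNReal.ofReal_add (by positivity)
          (by positivity), ENNReal.ofReal_pow zero_le_two, ENNReal.ofReal_ofNat,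
          ENNReal.ofReal_pow (abs_nonneg a), ENNReal.ofReal_pow (abs_nonneg b)]

lemma lintegral_ofReal_pow_mul_exp_sub_le (N a : ℝ) (d : ℕ) :
    ∫⁻ r : ℝ, ENNReal.ofReal r ^ d * ENNReal.ofReal (exp (-(r - a) ^ 2 / (2 * N))) ≤
      2 ^ (d - 1) * ((∫⁻ r : ℝ, ENNReal.ofReal |r| ^ d * ENNReal.ofReal (exp (-r ^ 2 / (2 * N)))) +
        ENNReal.ofReal |a| ^ d * ∫⁻ r : ℝ, ENNReal.ofReal (exp (-r ^ 2 / (2 * N)))) := by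
  rw [← lintegral_add_right_eq_self _ a, ← lintegral_const_mul _ (by fun_prop),
    ← lintegral_add_left (by fun_prop), ← lintegral_const_mul _ (by fun_prop)]
  refine lintegral_mono fun r => ?_
  rw [add_sub_cancel_right, ← add_mul, ← mul_assoc]
  gcongr
  refine le_trans ?_ (ofReal_abs_add_pow_le r a d)
  gcongr
  exact le_abs_self _

section Stability

variable {E : Type*} [NormedAddCommGroup E] [InnerProductSpace ℝ E] {k : ℕ} {N : ℝ}

lemma residualSq_le_add_mul (Γ Γ' : Fin k → E) (x : Fin k → ℝ) (y : E) {ε : ℝ} (hε : 0 < ε)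
    (hε_le : ε ≤ 1) :
    residualSq Γ' x y ≤
      (1 + ε) * residualSq Γ x y + 2 / ε * ∑ i, ⟪Γ' i - Γ i, y⟫ ^ 2 := by
  unfold residualSq
  rw [Finset.mul_sum, Finset.mul_sum, ← Finset.sum_add_distrib]
  refine Finset.sum_le_sum fun i _ => ?_
  rw [inner_sub_left]
  generalize ⟪Γ i, y⟫ = b, ⟪Γ' i, y⟫ = c
  have h_gap : (1 + ε) * (x i - b) ^ 2 + (1 + 1 / ε) * (c - b) ^ 2 - (x i - c) ^ 2 =
      (ε * (x i - b) + (c - b)) ^ 2 / ε := by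
    field_simp
    ring
  have h_nonneg : 0 ≤ (ε * (x i - b) + (c - b)) ^ 2 / ε := by positivity
  have h_inv : 1 + 1 / ε ≤ 2 / ε := by
    rw [le_div_iff₀ hε, add_mul, div_mul_cancel₀ _ hε.ne']
    linarith
  linarith [mul_le_mul_of_nonneg_right h_inv (sq_nonneg (c - b))]

lemma smoothingKernel_mul_exp_le (hN : 0 < N) (Γ Γ' : Fin k → E) (x : Fin k → ℝ) (y : E) {ε : ℝ}
    (hε : 0 < ε) (hε_le : ε ≤ 1) :
    smoothingKernel N Γ x y * ENNReal.ofReal (exp (-(ε / (2 * N) * residualSq Γ x y +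
      1 / (ε * N) * ∑ i, ⟪Γ' i - Γ i, y⟫ ^ 2))) ≤ smoothingKernel N Γ' x y := by
  unfold smoothingKernel
  rw [← ENNReal.ofReal_mul (by positivity), ← exp_add]
  gcongr
  have h := div_le_div_of_nonneg_right (residualSq_le_add_mul Γ Γ' x y hε hε_le)
    (by positivity : 0 ≤ 2 * N)
  rw [neg_div, neg_div, ← neg_add, neg_le_neg_iff]
  refine h.trans_eq ?_
  field_simp
  ring

lemma smoothingKernel_smul_le (hN : 0 < N) (Γ : Fin k → E) {e : Fin k → ℝ} {i₀ : Fin k}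
    (he : e i₀ = 1) (r : ℝ) (y : E) :
    smoothingKernel N Γ (r • e) y ≤ ENNReal.ofReal (exp (-(r - ⟪Γ i₀, y⟫) ^ 2 / (2 * N))) := by
  unfold smoothingKernel
  gcongr
  have h := Finset.single_le_sum (f := fun i => ((r • e) i - ⟪Γ i, y⟫) ^ 2)
    (fun i _ => sq_nonneg _) (Finset.mem_univ i₀)
  simpa only [Pi.smul_apply, smul_eq_mul, he, mul_one, residualSq] using h

variable [MeasurableSpace E] [BorelSpace E] [SecondCountableTopology E] {ν : Measure E}

lemma radialMoment_ne_top (hN : 0 < N) [IsFiniteMeasure ν] (Γ : Fin k → E) {e : Fin k → ℝ}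
    {i₀ : Fin k} (he : e i₀ = 1) (d : ℕ)
    (h_fin : ∫⁻ y, ENNReal.ofReal |⟪Γ i₀, y⟫| ^ d ∂ν ≠ ∞) : radialMoment N ν Γ e d ≠ ∞ := by
  have h_gauss := lintegral_abs_pow_mul_exp_ne_top hN d
  have h_mass := lintegral_abs_pow_mul_exp_ne_top hN 0
  simp only [pow_zero, one_mul] at h_mass
  rw [← tiltedMeasure_univ, ← lintegral_one, tiltedMeasure,
    lintegral_withDensity_eq_lintegral_mul _ (by fun_prop) (by fun_prop),
    lintegral_prod_symm _ (by fun_prop)]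
  refine ne_top_of_le_ne_top ?_ (lintegral_mono fun y => (lintegral_mono fun r => ?_).trans
    (lintegral_ofReal_pow_mul_exp_sub_le N ⟪Γ i₀, y⟫ d))
  · rw [lintegral_const_mul _ (by fun_prop), lintegral_add_left (by fun_prop),
      lintegral_mul_const _ (by fun_prop), lintegral_const]
    finiteness
  · simp only [Pi.mul_apply, mul_one]
    gcongr
    exact smoothingKernel_smul_le hN Γ he r y

lemma lintegral_sq_inner_tiltedMeasure_le (hN : 0 < N) [IsProbabilityMeasure ν]
    (hν : PrekopaLeindler ν) [ν.IsNegInvariant] (Γ : Fin k → E) (e : Fin k → ℝ) {d : ℕ}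
    (hk : 2 ≤ k) (hd : d + 1 ≤ 3 * k) {L : ℝ} (hL : 0 < L) {v : E}
    (hv : ∫⁻ y, ENNReal.ofReal |⟪v, y⟫| ^ k ∂ν ≤ ENNReal.ofReal (L * ‖v‖) ^ k) :
    ∫⁻ z, ENNReal.ofReal (⟪v, z.2⟫ ^ 2) ∂tiltedMeasure N ν Γ e d ≤
      ENNReal.ofReal (8192 * L ^ 2 * ‖v‖ ^ 2) * radialMoment N ν Γ e d := by
  rcases eq_or_ne v 0 with rfl | hv_ne
  · simp
  have : 0 < ‖v‖ := norm_pos_iff.2 hv_ne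
  rw [show 8192 * L ^ 2 * ‖v‖ ^ 2 = 2 * (64 * (L * ‖v‖)) ^ 2 by ring, ← tiltedMeasure_univ]
  refine lintegral_sq_le_of_lintegral_pow_le (by fun_prop) (by positivity) hk ?_
  refine (lintegral_abs_inner_pow_tiltedMeasure_le hN hν Γ e (by lia) hd v).trans ?_
  rw [tiltedMeasure_univ, ENNReal.ofReal_mul (by norm_num), ENNReal.ofReal_ofNat, mul_pow]
  gcongr

lemma lintegral_residualSq_tiltedMeasure_le (hN : 0 < N) [IsProbabilityMeasure ν]
    (hν : PrekopaLeindler ν) [ν.IsNegInvariant] (Γ : Fin k → E) (e : Fin k → ℝ) {d : ℕ}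
    (hk : k ≠ 0) (hd : d + 1 ≤ 3 * k) :
    ∫⁻ z, ENNReal.ofReal (residualSq Γ (z.1 • e) z.2) ∂tiltedMeasure N ν Γ e d ≤
      ENNReal.ofReal (80 * N * k) * radialMoment N ν Γ e d := by
  have hk_one : (1 : ℝ) ≤ k := Nat.one_le_cast.2 (Nat.one_le_iff_ne_zero.2 hk)
  have h_const : (4 : ℝ≥0∞) ^ k * 2 ^ (d + 1) ≤ ENNReal.ofReal (exp (5 * k)) := by
    calc (4 : ℝ≥0∞) ^ k * 2 ^ (d + 1) ≤ 2 ^ (5 * k) := by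
          rw [show (4 : ℝ≥0∞) = 2 ^ 2 by norm_num, ← pow_mul, ← pow_add]
          exact pow_le_pow_right₀ one_le_two (by lia)
      _ = ENNReal.ofReal (2 ^ (5 * k)) := by
          rw [ENNReal.ofReal_pow zero_le_two, ENNReal.ofReal_ofNat]
      _ ≤ ENNReal.ofReal (exp 1 ^ (5 * k)) := by
          gcongr
          linarith [add_one_le_exp 1]
      _ = _ := by
          rw [← exp_nat_mul]
          push_cast
          ring_nf
  rw [show 80 * N * k = 16 * N * (5 * k) by ring, ← tiltedMeasure_univ]
  refine lintegral_ofReal_le_of_lintegral_exp_le (by fun_prop) (by positivity) (by linarith) ?_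
  refine (lintegral_exp_residualSq_tiltedMeasure_le hN hν Γ e d).trans ?_
  rw [tiltedMeasure_univ]
  gcongr

lemma lintegral_perturbation_tiltedMeasure_le (hN : 0 < N) [IsProbabilityMeasure ν]
    (hν : PrekopaLeindler ν) [ν.IsNegInvariant] (Γ H : Fin k → E) (e : Fin k → ℝ) {d : ℕ}
    (hk : 2 ≤ k) (hd : d + 1 ≤ 3 * k) {L : ℝ} (hL : 0 < L)
    (h_mom : ∀ v, ∫⁻ y, ENNReal.ofReal |⟪v, y⟫| ^ k ∂ν ≤ ENNReal.ofReal (L * ‖v‖) ^ k) {a b : ℝ}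
    (ha : 0 ≤ a) (hb : 0 ≤ b) :
    ∫⁻ z, ENNReal.ofReal (a * residualSq Γ (z.1 • e) z.2 + b * ∑ i, ⟪H i, z.2⟫ ^ 2)
        ∂tiltedMeasure N ν Γ e d ≤
      ENNReal.ofReal (a * (80 * N * k) + b * (8192 * L ^ 2 * ∑ i, ‖H i‖ ^ 2)) *
        radialMoment N ν Γ e d := by
  have h_split : ∀ z : ℝ × E,
      ENNReal.ofReal (a * residualSq Γ (z.1 • e) z.2 + b * ∑ i, ⟪H i, z.2⟫ ^ 2) =
        ENNReal.ofReal a * ENNReal.ofReal (residualSq Γ (z.1 • e) z.2) +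
          ENNReal.ofReal b * ∑ i, ENNReal.ofReal (⟪H i, z.2⟫ ^ 2) := by
    intro z
    have h_res := residualSq_nonneg Γ (z.1 • e) z.2
    rw [← ENNReal.ofReal_sum_of_nonneg fun _ _ => sq_nonneg _, ← ENNReal.ofReal_mul ha,
      ← ENNReal.ofReal_mul hb, ← ENNReal.ofReal_add (by positivity) (by positivity)]
  simp_rw [h_split]
  rw [lintegral_add_left (by fun_prop), lintegral_const_mul _ (by fun_prop),
    lintegral_const_mul _ (by fun_prop), lintegral_finsetSum _ fun i _ => by fun_prop]
  calc _ ≤ ENNReal.ofReal a * (ENNReal.ofReal (80 * N * k) * radialMoment N ν Γ e d) +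
        ENNReal.ofReal b *
          ∑ i, ENNReal.ofReal (8192 * L ^ 2 * ‖H i‖ ^ 2) * radialMoment N ν Γ e d := by
        gcongr with i
        · exact lintegral_residualSq_tiltedMeasure_le hN hν Γ e (by lia) hd
        · exact lintegral_sq_inner_tiltedMeasure_le hN hν Γ e hk hd hL (h_mom _)
    _ = _ := by
        rw [← Finset.sum_mul, ← ENNReal.ofReal_sum_of_nonneg fun _ _ => by positivity, ← mul_assoc,
          ← mul_assoc, ← ENNReal.ofReal_mul ha, ← ENNReal.ofReal_mul hb, ← add_mul,
          ← ENNReal.ofReal_add (by positivity) (by positivity), ← Finset.mul_sum]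

lemma radialMoment_le_exp_mul_radialMoment (hN : 0 < N) [IsProbabilityMeasure ν]
    (hν : PrekopaLeindler ν) [ν.IsNegInvariant]
    (h_fin : ∀ (v : E) (m : ℕ), ∫⁻ y, ENNReal.ofReal |⟪v, y⟫| ^ m ∂ν ≠ ∞)
    (Γ Γ' : Fin k → E) {e : Fin k → ℝ} {i₀ : Fin k} (he : e i₀ = 1) {d : ℕ} (hk : 2 ≤ k)
    (hd : d + 1 ≤ 3 * k) {L : ℝ} (hL : 0 < L)
    (h_mom : ∀ v, ∫⁻ y, ENNReal.ofReal |⟪v, y⟫| ^ k ∂ν ≤ ENNReal.ofReal (L * ‖v‖) ^ k)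
    (hLN : 16384 * L ^ 2 ≤ N) :
    radialMoment N ν Γ e d ≤
      ENNReal.ofReal (exp (655360 * L ^ 2 * k / N + (∑ i, ‖Γ' i - Γ i‖ ^ 2) / 2)) *
        radialMoment N ν Γ' e d := by
  -- The choice of `ε` turns the second-moment term into exactly `(∑ i, ‖Γ' i - Γ i‖ ^ 2) / 2`.
  set ε := 16384 * L ^ 2 / N with hε
  have hε_pos : 0 < ε := by positivity
  have hε_le : ε ≤ 1 := (div_le_one hN).2 hLN
  set c := 655360 * L ^ 2 * k / N + (∑ i, ‖Γ' i - Γ i‖ ^ 2) / 2 with hc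
  set f : ℝ × E → ℝ := fun z => ε / (2 * N) * residualSq Γ (z.1 • e) z.2 +
    1 / (ε * N) * ∑ i, ⟪Γ' i - Γ i, z.2⟫ ^ 2
  have hf_meas : Measurable f := by fun_prop
  have hf_nonneg : ∀ z, 0 ≤ f z := fun z => by
    have := residualSq_nonneg Γ (z.1 • e) z.2
    positivity
  have : IsFiniteMeasure (tiltedMeasure N ν Γ e d) := ⟨by
    rw [tiltedMeasure_univ]
    exact (radialMoment_ne_top hN Γ he d (h_fin _ d)).lt_top⟩
  have hf_int : ∫⁻ z, ENNReal.ofReal (f z) ∂tiltedMeasure N ν Γ e d ≤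
      ENNReal.ofReal c * tiltedMeasure N ν Γ e d Set.univ := by
    have h := lintegral_perturbation_tiltedMeasure_le hN hν Γ (fun i => Γ' i - Γ i) e hk hd hL
      h_mom (a := ε / (2 * N)) (b := 1 / (ε * N)) (by positivity) (by positivity)
    rw [tiltedMeasure_univ]
    refine h.trans_eq ?_
    congr 2
    rw [hc, hε]
    field_simp
    ring
  have h_jensen := ofReal_exp_neg_mul_le_lintegral hf_meas hf_nonneg (by positivity) hf_int
  have h_le : ∫⁻ z, ENNReal.ofReal (exp (-f z)) ∂tiltedMeasure N ν Γ e d ≤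
      radialMoment N ν Γ' e d := by
    rw [lintegral_tiltedMeasure Γ e d (by fun_prop)]
    unfold radialMoment smoothedMarginal
    gcongr with r y
    exact smoothingKernel_mul_exp_le hN Γ Γ' (r • e) y hε_pos hε_le
  calc radialMoment N ν Γ e d
      = ENNReal.ofReal (exp c) * (ENNReal.ofReal (exp (-c)) * radialMoment N ν Γ e d) := by
        rw [← mul_assoc, ← ENNReal.ofReal_mul (by positivity), ← exp_add, add_neg_cancel, exp_zero,
          ENNReal.ofReal_one, one_mul]
    _ ≤ _ := by
        gcongr
        rw [← tiltedMeasure_univ]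
        exact h_jensen.trans h_le

end Stability

/-! ### Reverse Hölder inequality for regularized moments -/

lemma one_add_le_exp_add_div {u x : ℝ} (hu : 0 ≤ 1 + u) (hx : 0 < 1 + x) :
    1 + u ≤ exp (x + (u - x) / (1 + x)) := by
  have h_quot : (u - x) / (1 + x) + 1 = (1 + u) / (1 + x) := by
    field_simp
    ring
  have h_nonneg : 0 ≤ (u - x) / (1 + x) + 1 := by
    rw [h_quot]
    positivity
  calc 1 + u = (x + 1) * ((u - x) / (1 + x) + 1) := by
        rw [h_quot]
        field_simp
        ring
    _ ≤ exp x * exp ((u - x) / (1 + x)) :=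
        mul_le_mul (add_one_le_exp _) (add_one_le_exp _) h_nonneg (exp_pos _).le
    _ = _ := (exp_add _ _).symm

lemma one_add_pow_mul_one_sub_pow_le {p m : ℕ} (hpm : p < m) {u : ℝ} (hu : |u| ≤ 1) :
    (1 + u) ^ (m + p) * (1 - u) ^ (m - p) ≤ exp (2 * (p : ℝ) ^ 2 / m) := by
  have hm : (0 : ℝ) < m := by exact_mod_cast (Nat.zero_le p).trans_lt hpm
  have hx1 : (p : ℝ) / m < 1 := (div_lt_one hm).2 (by exact_mod_cast hpm)
  have hpx : (p : ℝ) = m * (p / m) := by field_simp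
  set x : ℝ := p / m
  have hx0 : 0 ≤ x := by positivity
  obtain ⟨hu_neg, hu_pos⟩ := abs_le.1 hu
  have h_plus := one_add_le_exp_add_div (u := u) (x := x) (by linarith) (by linarith)
  have h_minus := one_add_le_exp_add_div (u := -u) (x := -x) (by linarith) (by linarith)
  have h_exponent : ((m + p : ℕ) : ℝ) * (x + (u - x) / (1 + x)) +
      ((m - p : ℕ) : ℝ) * (-x + (-u - -x) / (1 + -x)) = 2 * (p : ℝ) ^ 2 / m := by
    have hx_minus : 1 + -x ≠ 0 := by linarith
    rw [Nat.cast_sub hpm.le, Nat.cast_add, hpx]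
    field_simp
    ring
  calc (1 + u) ^ (m + p) * (1 - u) ^ (m - p)
      ≤ exp (x + (u - x) / (1 + x)) ^ (m + p) * exp (-x + (-u - -x) / (1 + -x)) ^ (m - p) :=
        mul_le_mul (pow_le_pow_left₀ (by linarith) h_plus _)
          (pow_le_pow_left₀ (by linarith) h_minus _) (pow_nonneg (by linarith) _) (by positivity)
    _ = exp (2 * (p : ℝ) ^ 2 / m) := by
        rw [← exp_nat_mul, ← exp_nat_mul, ← exp_add, h_exponent]

lemma pow_mul_pow_le_exp_mul_midpoint_pow {p m : ℕ} (hpm : p < m) {r s : ℝ} (hr : 0 < r)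
    (hs : 0 < s) :
    r ^ (m + p) * s ^ (m - p) ≤ exp (2 * (p : ℝ) ^ 2 / m) * (midpoint ℝ r s ^ m) ^ 2 := by
  have h_mid : midpoint ℝ r s = (r + s) / 2 := by
    rw [midpoint_eq_smul_add, smul_eq_mul, invOf_eq_inv]
    ring
  have h_pow : (midpoint ℝ r s ^ m) ^ 2 = midpoint ℝ r s ^ (m + p) * midpoint ℝ r s ^ (m - p) := by
    rw [← pow_add, ← pow_mul]
    congr 1
    omega
  set u := (r - s) / (r + s)
  have hr_eq : r = midpoint ℝ r s * (1 + u) := by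
    simp only [h_mid, u]
    field_simp
    ring
  have hs_eq : s = midpoint ℝ r s * (1 - u) := by
    simp only [h_mid, u]
    field_simp
    ring
  have hu : |u| ≤ 1 := by
    rw [abs_le]
    constructor
    · rw [le_div_iff₀ (by positivity)]
      linarith
    · rw [div_le_one (by positivity)]
      linarith
  calc r ^ (m + p) * s ^ (m - p)
      = (midpoint ℝ r s ^ m) ^ 2 * ((1 + u) ^ (m + p) * (1 - u) ^ (m - p)) := by
        rw [h_pow, mul_mul_mul_comm, ← mul_pow, ← mul_pow, ← hr_eq, ← hs_eq]
    _ ≤ (midpoint ℝ r s ^ m) ^ 2 * exp (2 * (p : ℝ) ^ 2 / m) := by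
        gcongr
        exact one_add_pow_mul_one_sub_pow_le hpm hu
    _ = _ := mul_comm _ _

lemma ennreal_ofReal_exp_eq_sq (x : ℝ) :
    ENNReal.ofReal (exp x) = ENNReal.ofReal (exp (x / 2)) ^ 2 := by
  rw [← ENNReal.ofReal_pow (exp_pos _).le, ← exp_nat_mul]
  congr 2
  push_cast
  ring

/-- The unnormalised one-sided moments of the standard Gaussian. -/
def halfGaussianMoment (d : ℕ) : ℝ≥0∞ :=
  ∫⁻ r : ℝ, ENNReal.ofReal r ^ d * ENNReal.ofReal (exp (-r ^ 2 / 2))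

lemma halfGaussianMoment_ne_top (d : ℕ) : halfGaussianMoment d ≠ ∞ := by
  refine ne_top_of_le_ne_top (lintegral_abs_pow_mul_exp_ne_top one_pos d)
    (lintegral_mono fun r => ?_)
  rw [mul_one]
  gcongr
  exact le_abs_self r

lemma halfGaussianMoment_ne_zero (d : ℕ) : halfGaussianMoment d ≠ 0 := by
  refine ((lintegral_pos_iff_support (by fun_prop)).2 ?_).ne'
  have h_Ioi : volume (Set.Ioi (0 : ℝ)) ≠ 0 := by simp
  refine h_Ioi.bot_lt.trans_le (measure_mono fun r (hr : 0 < r) => ?_)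
  simp [hr, exp_pos]

lemma sq_halfGaussianMoment_le {p m : ℕ} (hpm : p ≤ m) :
    halfGaussianMoment m ^ 2 ≤ halfGaussianMoment (m + p) * halfGaussianMoment (m - p) := by
  obtain ⟨q, rfl⟩ := Nat.exists_eq_add_of_le' hpm
  rw [Nat.add_sub_cancel]
  have h_cs := sq_lintegral_le (volume.withDensity fun r : ℝ =>
    ENNReal.ofReal r ^ q * ENNReal.ofReal (exp (-r ^ 2 / 2)))
    (f := fun r => ENNReal.ofReal r ^ p) (by fun_prop)
  rw [lintegral_withDensity_eq_lintegral_mul _ (by fun_prop) (by fun_prop),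
    lintegral_withDensity_eq_lintegral_mul _ (by fun_prop) (by fun_prop),
    withDensity_apply _ MeasurableSet.univ, Measure.restrict_univ] at h_cs
  simp only [Pi.mul_apply] at h_cs
  simp only [mul_right_comm _ (ENNReal.ofReal (exp _)), ← pow_mul, mul_two, ← pow_add,
    ← add_assoc] at h_cs
  exact h_cs

lemma lintegral_ofReal_pow_mul_exp (d : ℕ) {S : ℝ} (hS : 0 < S) :
    ∫⁻ r : ℝ, ENNReal.ofReal r ^ d * ENNReal.ofReal (exp (-r ^ 2 / (2 * S ^ 2))) =
      ENNReal.ofReal S ^ (d + 1) * halfGaussianMoment d := by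
  have h_scale : ∀ r : ℝ, ENNReal.ofReal r ^ d * ENNReal.ofReal (exp (-r ^ 2 / (2 * S ^ 2))) =
      ENNReal.ofReal S ^ d * (ENNReal.ofReal (S⁻¹ • r) ^ d *
        ENNReal.ofReal (exp (-(S⁻¹ • r) ^ 2 / 2))) := by
    intro r
    rw [← mul_assoc, ← mul_pow, ← ENNReal.ofReal_mul hS.le, smul_eq_mul,
      mul_inv_cancel_left₀ hS.ne']
    congr 3
    field_simp
  simp_rw [h_scale]
  rw [lintegral_const_mul _ (by fun_prop), lintegral_comp_smul volume
    (g := fun t : ℝ => ENNReal.ofReal t ^ d * ENNReal.ofReal (exp (-t ^ 2 / 2))) (by fun_prop)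
    (inv_pos.2 hS), Module.finrank_self, inv_inv, pow_one, ← mul_assoc, ← pow_succ,
    halfGaussianMoment]

lemma sum_norm_midpoint_sub_sq {V ι : Type*} [NormedAddCommGroup V] [NormedSpace ℝ V]
    [Fintype ι] (x y : ι → V) :
    ∑ i, ‖midpoint ℝ x y i - x i‖ ^ 2 = (∑ i, ‖x i - y i‖ ^ 2) / 4 := by
  rw [Finset.sum_div]
  refine Finset.sum_congr rfl fun i _ => ?_
  have h_mid : midpoint ℝ x y i = midpoint ℝ (x i) (y i) := by
    simp [midpoint_eq_smul_add]
  rw [h_mid, ← dist_eq_norm, dist_midpoint_left, dist_eq_norm, mul_pow, norm_ofNat]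
  ring

section RegularizedMoment

variable {E : Type*} [NormedAddCommGroup E] [MeasurableSpace E] {k : ℕ} {N : ℝ} {ν : Measure E}

/-- The `p`-th moment of the regularized norm `√(N + ‖Y‖²)` of a vector `Y` of law `ν`. -/
def regularizedMoment (N : ℝ) (ν : Measure E) (p : ℕ) : ℝ≥0∞ :=
  ∫⁻ y, ENNReal.ofReal √(N + ‖y‖ ^ 2) ^ p ∂ν

lemma regularizedMoment_zero [IsProbabilityMeasure ν] : regularizedMoment N ν 0 = 1 := by
  simp [regularizedMoment]

variable [InnerProductSpace ℝ E] [BorelSpace E]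

lemma radialMoment_mul_le [SecondCountableTopology E] [SFinite ν] (hN : 0 < N)
    (hν : PrekopaLeindler ν) (Γ : Fin k → E) (e : Fin k → ℝ) {p m : ℕ} (hpm : p < m) :
    radialMoment N ν Γ e (m + p) * radialMoment N ν Γ e (m - p) ≤
      ENNReal.ofReal (exp (2 * (p : ℝ) ^ 2 / m)) * radialMoment N ν Γ e m ^ 2 := by
  set C := ENNReal.ofReal (exp (2 * (p : ℝ) ^ 2 / m / 2))
  have hC : ENNReal.ofReal (exp (2 * (p : ℝ) ^ 2 / m)) = C ^ 2 := ennreal_ofReal_exp_eq_sq _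
  have h_pl := prekopaLeindler_volume_real
    (fun r => ENNReal.ofReal r ^ (m + p) * smoothedMarginal N ν Γ (r • e))
    (fun r => ENNReal.ofReal r ^ (m - p) * smoothedMarginal N ν Γ (r • e))
    (fun r => C * (ENNReal.ofReal r ^ m * smoothedMarginal N ν Γ (r • e)))
    (by fun_prop) (by fun_prop) (by fun_prop) ?_
  · rwa [lintegral_const_mul _ (by fun_prop), mul_pow, ← hC] at h_pl
  intro r s
  rw [one_mul, mul_pow, ← hC]
  rcases le_or_gt r 0 with hr | hr
  · simp [ENNReal.ofReal_of_nonpos hr, zero_pow (show m + p ≠ 0 by omega)]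
  rcases le_or_gt s 0 with hs | hs
  · simp [ENNReal.ofReal_of_nonpos hs, zero_pow (show m - p ≠ 0 by omega)]
  have h_mid : midpoint ℝ (r • e) (s • e) = midpoint ℝ r s • e := by
    simp only [midpoint_eq_smul_add, ← add_smul, smul_assoc]
  have h_marginal := smoothedMarginal_mul_le hN hν Γ (r • e) (s • e)
  rw [h_mid] at h_marginal
  have h_mid_nonneg : 0 ≤ midpoint ℝ r s := by
    rw [midpoint_eq_smul_add, smul_eq_mul, invOf_eq_inv]
    positivity
  have h_power : ENNReal.ofReal r ^ (m + p) * ENNReal.ofReal s ^ (m - p) ≤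
      ENNReal.ofReal (exp (2 * (p : ℝ) ^ 2 / m)) * (ENNReal.ofReal (midpoint ℝ r s) ^ m) ^ 2 := by
    rw [← ENNReal.ofReal_pow hr.le, ← ENNReal.ofReal_pow hs.le, ← ENNReal.ofReal_pow h_mid_nonneg,
      ← ENNReal.ofReal_pow (by positivity), ← ENNReal.ofReal_mul (by positivity),
      ← ENNReal.ofReal_mul (by positivity)]
    exact ENNReal.ofReal_le_ofReal (pow_mul_pow_le_exp_mul_midpoint_pow hpm hr hs)
  rw [mul_mul_mul_comm, mul_pow (ENNReal.ofReal _ ^ m), ← mul_assoc (ENNReal.ofReal (exp _))]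
  exact mul_le_mul' h_power h_marginal

variable [FiniteDimensional ℝ E]

lemma lintegral_smoothedMarginal_gaussianRows (hN : 0 < N) [SFinite ν] (x : Fin k → ℝ) :
    ∫⁻ Γ, smoothedMarginal N ν Γ x ∂gaussianRows E k =
      ∫⁻ y, ENNReal.ofReal (√(N / (N + ‖y‖ ^ 2)) ^ k *
        exp (-(∑ i, x i ^ 2) / (2 * (N + ‖y‖ ^ 2)))) ∂ν := by
  unfold smoothedMarginal
  rw [lintegral_lintegral_swap (by unfold Function.uncurry; fun_prop)]
  exact lintegral_congr fun y => lintegral_exp_gaussianRows hN x y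

lemma lintegral_radialMoment_gaussianRows (hN : 0 < N) [SFinite ν] {e : Fin k → ℝ}
    (he : ∑ i, e i ^ 2 = 1) {p d : ℕ} (hd : d + 1 = p + k) :
    ∫⁻ Γ, radialMoment N ν Γ e d ∂gaussianRows E k =
      ENNReal.ofReal √N ^ k * halfGaussianMoment d * regularizedMoment N ν p := by
  have h_row : ∀ r : ℝ, ∫⁻ Γ, ENNReal.ofReal r ^ d * smoothedMarginal N ν Γ (r • e)
      ∂gaussianRows E k = ∫⁻ y, ENNReal.ofReal r ^ d * ENNReal.ofReal
        (√(N / (N + ‖y‖ ^ 2)) ^ k * exp (-r ^ 2 / (2 * (N + ‖y‖ ^ 2)))) ∂ν := by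
    intro r
    rw [lintegral_const_mul _ (by fun_prop), lintegral_const_mul _ (by fun_prop),
      lintegral_smoothedMarginal_gaussianRows hN]
    simp only [Pi.smul_apply, smul_eq_mul, mul_pow, ← Finset.mul_sum, he, mul_one]
  unfold radialMoment
  rw [lintegral_lintegral_swap (by unfold Function.uncurry; fun_prop)]
  simp_rw [h_row]
  rw [lintegral_lintegral_swap (by unfold Function.uncurry; fun_prop), regularizedMoment,
    ← lintegral_const_mul _ (by fun_prop)]
  refine lintegral_congr fun y => ?_
  have hS0 : 0 < √(N + ‖y‖ ^ 2) := sqrt_pos.2 (by positivity)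
  have hS2 : N + ‖y‖ ^ 2 = √(N + ‖y‖ ^ 2) ^ 2 := (sq_sqrt (by positivity)).symm
  set S := √(N + ‖y‖ ^ 2)
  rw [hS2, sqrt_div hN.le, sqrt_sq hS0.le]
  have h_const : ENNReal.ofReal (√N / S) * ENNReal.ofReal S = ENNReal.ofReal √N := by
    rw [← ENNReal.ofReal_mul (by positivity), div_mul_cancel₀ _ hS0.ne']
  simp_rw [ENNReal.ofReal_mul (pow_nonneg (div_nonneg (sqrt_nonneg N) hS0.le) k),
    mul_left_comm (ENNReal.ofReal _ ^ d)]
  rw [lintegral_const_mul _ (by fun_prop), lintegral_ofReal_pow_mul_exp d hS0, hd, ← h_const,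
    ENNReal.ofReal_pow (by positivity)]
  ring

lemma radialMoment_mul_radialMoment_le (hN : 0 < N) [IsProbabilityMeasure ν]
    (hν : PrekopaLeindler ν) [ν.IsNegInvariant]
    (h_fin : ∀ (v : E) (m : ℕ), ∫⁻ y, ENNReal.ofReal |⟪v, y⟫| ^ m ∂ν ≠ ∞)
    (Γ₁ Γ₂ : Fin k → E) {e : Fin k → ℝ} {i₀ : Fin k} (he : e i₀ = 1) {p m : ℕ} (hpm : p < m)
    (hk : 2 ≤ k) (hm : m + p + 1 ≤ 3 * k) {L : ℝ} (hL : 0 < L)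
    (h_mom : ∀ v, ∫⁻ y, ENNReal.ofReal |⟪v, y⟫| ^ k ∂ν ≤ ENNReal.ofReal (L * ‖v‖) ^ k)
    (hLN : 16384 * L ^ 2 ≤ N) :
    radialMoment N ν Γ₁ e (m + p) * radialMoment N ν Γ₂ e (m - p) ≤
      ENNReal.ofReal (exp (1310720 * L ^ 2 * k / N + 2 * (p : ℝ) ^ 2 / m +
        (∑ i, ‖Γ₁ i - Γ₂ i‖ ^ 2) / 4)) * radialMoment N ν (midpoint ℝ Γ₁ Γ₂) e m ^ 2 := by
  have h₁ := radialMoment_le_exp_mul_radialMoment hN hν h_fin Γ₁ (midpoint ℝ Γ₁ Γ₂) he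
    (d := m + p) hk hm hL h_mom hLN
  have h₂ := radialMoment_le_exp_mul_radialMoment hN hν h_fin Γ₂ (midpoint ℝ Γ₁ Γ₂) he
    (d := m - p) hk (by omega) hL h_mom hLN
  have h_dist₂ := sum_norm_midpoint_sub_sq Γ₂ Γ₁
  simp only [midpoint_comm (R := ℝ) Γ₂ Γ₁, norm_sub_rev (Γ₂ _)] at h_dist₂
  rw [sum_norm_midpoint_sub_sq] at h₁
  rw [h_dist₂] at h₂
  set σ := ∑ i, ‖Γ₁ i - Γ₂ i‖ ^ 2
  set δ := 655360 * L ^ 2 * k / N + σ / 4 / 2 with hδ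
  have h_exponent : 1310720 * L ^ 2 * k / N + 2 * (p : ℝ) ^ 2 / m + σ / 4 =
      δ + δ + 2 * (p : ℝ) ^ 2 / m := by
    rw [hδ]
    ring
  refine (mul_le_mul' h₁ h₂).trans ?_
  rw [mul_mul_mul_comm, ← ENNReal.ofReal_mul (exp_pos _).le, ← exp_add, h_exponent,
    exp_add (δ + δ), ENNReal.ofReal_mul (exp_pos _).le, mul_assoc (ENNReal.ofReal _)]
  exact mul_le_mul_right (radialMoment_mul_le hN hν _ e hpm) _

theorem regularizedMoment_two_mul_le (hN : 0 < N) [IsProbabilityMeasure ν]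
    (hν : PrekopaLeindler ν) [ν.IsNegInvariant]
    (h_fin : ∀ (v : E) (m : ℕ), ∫⁻ y, ENNReal.ofReal |⟪v, y⟫| ^ m ∂ν ≠ ∞)
    {p : ℕ} (hp : 1 ≤ p) (hpk : p ≤ k) (hk : 2 ≤ k) {L : ℝ} (hL : 0 < L)
    (h_mom : ∀ v, ∫⁻ y, ENNReal.ofReal |⟪v, y⟫| ^ k ∂ν ≤ ENNReal.ofReal (L * ‖v‖) ^ k)
    (hLN : 16384 * L ^ 2 ≤ N) :
    regularizedMoment N ν (2 * p) ≤
      ENNReal.ofReal (exp (1310720 * L ^ 2 * k / N + 2 * (p : ℝ) ^ 2 / k)) *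
        regularizedMoment N ν p ^ 2 := by
  obtain ⟨m, hm⟩ : ∃ m, m + 1 = p + k := ⟨p + k - 1, by omega⟩
  let i₀ : Fin k := ⟨0, by omega⟩
  set e : Fin k → ℝ := Pi.single i₀ 1
  have he : e i₀ = 1 := Pi.single_eq_same i₀ 1
  have he_sq : ∑ i, e i ^ 2 = 1 := by
    rw [Finset.sum_eq_single i₀ (fun i _ hi => by simp [e, hi]) (by simp), he, one_pow]
  set c := 1310720 * L ^ 2 * k / N + 2 * (p : ℝ) ^ 2 / m with hc
  have h_pl := prekopaLeindlerWith_gaussianRows E k (fun Γ => radialMoment N ν Γ e (m + p))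
    (fun Γ => radialMoment N ν Γ e (m - p))
    (fun Γ => ENNReal.ofReal (exp (c / 2)) * radialMoment N ν Γ e m)
    (by fun_prop) (by fun_prop) (by fun_prop) fun Γ₁ Γ₂ => ?_
  swap
  · refine (radialMoment_mul_radialMoment_le hN hν h_fin Γ₁ Γ₂ he (by omega) hk (by omega) hL
      h_mom hLN).trans_eq ?_
    rw [← hc, exp_add, mul_comm (exp c), ENNReal.ofReal_mul (exp_pos _).le, mul_pow,
      ← ennreal_ofReal_exp_eq_sq, mul_assoc]
  rw [lintegral_const_mul _ (by fun_prop), mul_pow, ← ennreal_ofReal_exp_eq_sq,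
    lintegral_radialMoment_gaussianRows hN he_sq (p := 2 * p) (by omega),
    lintegral_radialMoment_gaussianRows hN he_sq (p := 0) (by omega),
    lintegral_radialMoment_gaussianRows hN he_sq hm, regularizedMoment_zero, mul_one] at h_pl
  set q := ENNReal.ofReal √N ^ k
  set D := q ^ 2 * (halfGaussianMoment (m + p) * halfGaussianMoment (m - p)) with hD
  have hD_zero : D ≠ 0 := mul_ne_zero (pow_ne_zero _ (pow_ne_zero _ (by simpa using hN)))
    (mul_ne_zero (halfGaussianMoment_ne_zero _) (halfGaussianMoment_ne_zero _))
  have hD_top : D ≠ ∞ := ENNReal.mul_ne_top (by finiteness)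
    (ENNReal.mul_ne_top (halfGaussianMoment_ne_top _) (halfGaussianMoment_ne_top _))
  have hkm : (k : ℝ) ≤ m := by exact_mod_cast (show k ≤ m by omega)
  have : (0 : ℝ) < k := by exact_mod_cast two_pos.trans_le hk
  refine (ENNReal.mul_le_mul_iff_left hD_zero hD_top).1 ?_
  calc regularizedMoment N ν (2 * p) * D
      = q * halfGaussianMoment (m + p) * regularizedMoment N ν (2 * p) *
          (q * halfGaussianMoment (m - p)) := by
        rw [hD]
        ring
    _ ≤ ENNReal.ofReal (exp c) * (q * halfGaussianMoment m * regularizedMoment N ν p) ^ 2 := h_pl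
    _ = ENNReal.ofReal (exp c) * regularizedMoment N ν p ^ 2 *
          (q ^ 2 * halfGaussianMoment m ^ 2) := by ring
    _ ≤ _ := by
        have hc_le : c ≤ 1310720 * L ^ 2 * k / N + 2 * (p : ℝ) ^ 2 / k := by
          rw [hc]
          gcongr
        have h_half := sq_halfGaussianMoment_le (show p ≤ m by omega)
        rw [hD]
        gcongr

end RegularizedMoment

/-! ### Moments of log-concave random vectors -/

section Moments

variable {E F : Type*} [NormedAddCommGroup E] [InnerProductSpace ℝ E] [MeasurableSpace E]
  [BorelSpace E] [SecondCountableTopology E] [NormedAddCommGroup F] [InnerProductSpace ℝ F]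
  [MeasurableSpace F] [BorelSpace F] [SecondCountableTopology F] {μ : Measure E} {N α B : ℝ}

namespace PrekopaLeindler

omit [SecondCountableTopology E] in
lemma lintegral_inner_pow_two_mul_ne_top (hμ : PrekopaLeindler μ) (v : E) {p : ℕ} (hp : p ≠ 0)
    (h : ∫⁻ y, ENNReal.ofReal ⟪v, y⟫ ^ p ∂μ ≠ ∞) :
    ∫⁻ y, ENNReal.ofReal ⟪v, y⟫ ^ (2 * p) ∂μ ≠ ∞ := by
  have h_meas : MeasurableSet {y : E | 0 ≤ ⟪v, y⟫} :=
    measurableSet_le (by fun_prop) (by fun_prop)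
  have h_pl : (∫⁻ y, ENNReal.ofReal ⟪v, y⟫ ^ (2 * p) ∂μ) * μ {y | 0 ≤ ⟪v, y⟫} ≤
      (2 ^ p * ∫⁻ y, ENNReal.ofReal ⟪v, y⟫ ^ p ∂μ) ^ 2 := by
    rw [← lintegral_indicator_one h_meas, ← lintegral_const_mul (2 ^ p) (by fun_prop)]
    refine hμ (fun y => ENNReal.ofReal ⟪v, y⟫ ^ (2 * p)) _
      (fun y => 2 ^ p * ENNReal.ofReal ⟪v, y⟫ ^ p) (by fun_prop)
      (measurable_one.indicator h_meas) (by fun_prop) fun x y => ?_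
    by_cases hy : y ∈ {y : E | 0 ≤ ⟪v, y⟫}
    · have h_mid : ENNReal.ofReal ⟪v, x⟫ ≤ 2 * ENNReal.ofReal ⟪v, midpoint ℝ x y⟫ := by
        rw [← ENNReal.ofReal_ofNat, ← ENNReal.ofReal_mul zero_le_two, midpoint_eq_smul_add,
          inner_smul_right, inner_add_right, invOf_eq_inv, mul_inv_cancel_left₀ two_ne_zero]
        exact ENNReal.ofReal_le_ofReal (le_add_of_nonneg_right hy)
      rw [Set.indicator_of_mem hy, Pi.one_apply, mul_one, one_mul, ← mul_pow, pow_mul']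
      gcongr
    · rw [Set.indicator_of_notMem hy, mul_zero]
      exact zero_le
  intro h_top
  by_cases h_null : μ {y | 0 ≤ ⟪v, y⟫} = 0
  · refine ENNReal.zero_ne_top ((lintegral_eq_zero_of_ae_eq_zero ?_).symm.trans h_top)
    filter_upwards [measure_eq_zero_iff_ae_notMem.1 h_null] with y hy
    rw [ENNReal.ofReal_of_nonpos (not_le.1 hy).le, zero_pow (by positivity), Pi.zero_apply]
  · rw [h_top, ENNReal.top_mul h_null] at h_pl
    exact ENNReal.pow_ne_top (ENNReal.mul_ne_top (by finiteness) h) (top_le_iff.1 h_pl)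

lemma lintegral_abs_inner_pow_two_mul_ne_top (hμ : PrekopaLeindler μ) (v : E) {p : ℕ} (hp : p ≠ 0)
    (h : ∫⁻ y, ENNReal.ofReal |⟪v, y⟫| ^ p ∂μ ≠ ∞) :
    ∫⁻ y, ENNReal.ofReal |⟪v, y⟫| ^ (2 * p) ∂μ ≠ ∞ := by
  have h_le : ∀ y, ENNReal.ofReal |⟪v, y⟫| ^ p =
      ENNReal.ofReal ⟪v, y⟫ ^ p + ENNReal.ofReal ⟪-v, y⟫ ^ p := fun y => by
    rw [ofReal_abs_pow_eq_add _ hp, inner_neg_left]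
  have h_eq : ∀ y, ENNReal.ofReal |⟪v, y⟫| ^ (2 * p) =
      ENNReal.ofReal ⟪v, y⟫ ^ (2 * p) + ENNReal.ofReal ⟪-v, y⟫ ^ (2 * p) := fun y => by
    rw [ofReal_abs_pow_eq_add _ (by positivity), inner_neg_left]
  rw [lintegral_congr h_le, lintegral_add_left (by fun_prop), ENNReal.add_ne_top] at h
  rw [lintegral_congr h_eq, lintegral_add_left (by fun_prop), ENNReal.add_ne_top]
  exact ⟨hμ.lintegral_inner_pow_two_mul_ne_top v hp h.1,
    hμ.lintegral_inner_pow_two_mul_ne_top (-v) hp h.2⟩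

lemma lintegral_abs_inner_pow_ne_top [IsFiniteMeasure μ] (hμ : PrekopaLeindler μ) (v : E)
    (h : ∫⁻ y, ENNReal.ofReal |⟪v, y⟫| ^ 2 ∂μ ≠ ∞) (m : ℕ) :
    ∫⁻ y, ENNReal.ofReal |⟪v, y⟫| ^ m ∂μ ≠ ∞ := by
  have h_dyadic : ∀ j : ℕ, ∫⁻ y, ENNReal.ofReal |⟪v, y⟫| ^ 2 ^ (j + 1) ∂μ ≠ ∞ := by
    intro j
    induction j with
    | zero => simpa only [zero_add, pow_one] using h
    | succ j ih =>
      rw [pow_succ' 2 (j + 1)]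
      exact hμ.lintegral_abs_inner_pow_two_mul_ne_top v (by positivity) ih
  have hm : m ≤ 2 ^ (m + 1) :=
    Nat.lt_two_pow_self.le.trans (Nat.pow_le_pow_right two_pos m.le_succ)
  have h_sum : ∫⁻ y, (1 + ENNReal.ofReal |⟪v, y⟫| ^ 2 ^ (m + 1)) ∂μ ≠ ∞ := by
    rw [lintegral_add_left measurable_const, lintegral_one]
    exact ENNReal.add_ne_top.2 ⟨measure_ne_top _ _, h_dyadic m⟩
  refine ne_top_of_le_ne_top h_sum (lintegral_mono fun y => ?_)
  rcases le_total (ENNReal.ofReal |⟪v, y⟫|) 1 with h_one | h_one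
  · exact (pow_le_one₀ zero_le h_one).trans le_self_add
  · exact (pow_le_pow_right₀ h_one hm).trans le_add_self

end PrekopaLeindler

/-- The `ψ_α` condition with constant `B` for a measure, stated for its integer moments only. The
second moments of the paper's normalisation are absorbed into `‖v‖`, as in isotropic position. -/
def HasPsiMoments (μ : Measure E) (α B : ℝ) : Prop :=
  ∀ k : ℕ, 2 ≤ k → ∀ v : E,
    ∫⁻ y, ENNReal.ofReal |⟪v, y⟫| ^ k ∂μ ≤ ENNReal.ofReal (B * (k : ℝ) ^ (1 / α) * ‖v‖) ^ k

lemma HasPsiMoments.lintegral_abs_inner_pow_ne_top [IsFiniteMeasure μ] (hψ : HasPsiMoments μ α B)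
    (hμ : PrekopaLeindler μ) (v : E) (m : ℕ) : ∫⁻ y, ENNReal.ofReal |⟪v, y⟫| ^ m ∂μ ≠ ∞ :=
  hμ.lintegral_abs_inner_pow_ne_top v
    (ne_top_of_le_ne_top (by finiteness) (hψ 2 le_rfl v)) m

omit [SecondCountableTopology E] in
lemma HasPsiMoments.map [CompleteSpace E] [CompleteSpace F] (hψ : HasPsiMoments μ α B)
    (hB : 0 ≤ B) (T : E →L[ℝ] F) : HasPsiMoments (μ.map T) α (B * ‖T‖) := fun k hk v => by
  rw [lintegral_map (by fun_prop) (by fun_prop)]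
  simp_rw [← ContinuousLinearMap.adjoint_inner_left]
  have h_adjoint : ‖ContinuousLinearMap.adjoint T v‖ ≤ ‖T‖ * ‖v‖ :=
    (ContinuousLinearMap.le_opNorm _ _).trans_eq (by rw [LinearIsometryEquiv.norm_map])
  refine (hψ k hk _).trans ?_
  gcongr ENNReal.ofReal ?_ ^ k
  calc B * (k : ℝ) ^ (1 / α) * ‖ContinuousLinearMap.adjoint T v‖
      ≤ B * (k : ℝ) ^ (1 / α) * (‖T‖ * ‖v‖) := by gcongr
    _ = B * ‖T‖ * (k : ℝ) ^ (1 / α) * ‖v‖ := by ring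

/-- `μ` is a square-integrable centred law with trace of covariance `N`. -/
structure IsCenteredOfVariance (μ : Measure E) (N : ℝ) : Prop where
  memLp : MemLp id 2 μ
  integral_eq_zero : ∫ y, y ∂μ = 0
  integral_norm_sq : ∫ y, ‖y‖ ^ 2 ∂μ = N

end Moments

section Isotropic

variable {Ω : Type*} [MeasurableSpace Ω] {P : Measure Ω} {n : ℕ}
  {X : Ω → EuclideanSpace ℝ (Fin n)} {α b : ℝ} {A : Matrix (Fin n) (Fin n) ℝ}

lemma norm_mApp_sq (A : Matrix (Fin n) (Fin n) ℝ) (x : EuclideanSpace ℝ (Fin n)) :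
    ‖mApp A x‖ ^ 2 = ∑ i, ⟪x, WithLp.toLp 2 (A i)⟫ ^ 2 := by
  rw [EuclideanSpace.real_norm_sq_eq]
  rfl

lemma hsNorm_nonneg (A : Matrix (Fin n) (Fin n) ℝ) : 0 ≤ hsNorm A :=
  sqrt_nonneg _

lemma opNorm_pos (hA : hsNorm A ≠ 0) : 0 < opNorm A := by
  refine norm_pos_iff.2 fun h => hA ?_
  have hA_zero : A = 0 := by simpa only [map_eq_zero_iff _ (LinearEquiv.injective _)] using h
  rw [hA_zero]
  simp [hsNorm]

namespace Isotropic

lemma integral_inner_sq (hX : Isotropic P X) (θ : EuclideanSpace ℝ (Fin n)) :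
    ∫ ω, ⟪X ω, θ⟫ ^ 2 ∂P = ‖θ‖ ^ 2 := by
  simp_rw [← real_inner_self_eq_norm_sq, ← hX.2 θ θ, sq]

lemma integrable_inner_sq (hX : Isotropic P X) (θ : EuclideanSpace ℝ (Fin n)) :
    Integrable (fun ω => ⟪X ω, θ⟫ ^ 2) P := by
  rcases eq_or_ne θ 0 with rfl | hθ
  · simp
  · refine Integrable.of_integral_ne_zero ?_
    rw [hX.integral_inner_sq]
    exact pow_ne_zero 2 (norm_ne_zero_iff.2 hθ)

lemma integrable_norm_mApp_sq (hX : Isotropic P X) (A : Matrix (Fin n) (Fin n) ℝ) :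
    Integrable (fun ω => ‖mApp A (X ω)‖ ^ 2) P := by
  simp_rw [norm_mApp_sq]
  exact integrable_finsetSum _ fun i _ => hX.integrable_inner_sq _

lemma integral_norm_mApp_sq (hX : Isotropic P X) (A : Matrix (Fin n) (Fin n) ℝ) :
    ∫ ω, ‖mApp A (X ω)‖ ^ 2 ∂P = hsNorm A ^ 2 := by
  simp_rw [norm_mApp_sq]
  rw [integral_finsetSum _ fun i _ => hX.integrable_inner_sq _, hsNorm, sq_sqrt (by positivity)]
  refine Finset.sum_congr rfl fun i _ => ?_
  rw [hX.integral_inner_sq, EuclideanSpace.real_norm_sq_eq]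

lemma memLp_two (hX : Isotropic P X) (hX_meas : AEStronglyMeasurable X P) : MemLp X 2 P := by
  rw [memLp_two_iff_integrable_sq_norm hX_meas]
  simpa [mApp] using hX.integrable_norm_mApp_sq 1

end Isotropic

lemma IsPsiAlpha.pos (hψ : IsPsiAlpha P X α b) (hX : Isotropic P X) (hn : 0 < n) : 0 < b := by
  have h := hψ 2 le_rfl (EuclideanSpace.single ⟨0, hn⟩ 1)
  simp only [rpow_two, sq_abs, hX.integral_inner_sq, PiLp.norm_single, norm_one, one_pow,
    one_rpow, mul_one] at h
  exact pos_of_mul_pos_left (one_pos.trans_le h) (by positivity)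

lemma IsPsiAlpha.hasPsiMoments_map [IsFiniteMeasure P] (hψ : IsPsiAlpha P X α b)
    (hX : Isotropic P X) (hX_meas : Measurable X) (h_pl : PrekopaLeindler (P.map X)) :
    HasPsiMoments (P.map X) α b := fun k hk θ => by
  have h_second : ∫⁻ y, ENNReal.ofReal |⟪θ, y⟫| ^ 2 ∂(P.map X) ≠ ∞ := by
    rw [lintegral_map (by fun_prop) hX_meas]
    simp_rw [← ENNReal.ofReal_pow (abs_nonneg _), sq_abs, real_inner_comm _ θ]
    exact (hX.integrable_inner_sq θ).lintegral_lt_top.ne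
  have h_fin := h_pl.lintegral_abs_inner_pow_ne_top θ h_second k
  rw [lintegral_map (by fun_prop) hX_meas] at h_fin ⊢
  have h := hψ k (by exact_mod_cast hk) θ
  simp_rw [rpow_natCast, hX.integral_inner_sq, ← sqrt_eq_rpow, sqrt_sq (norm_nonneg θ),
    real_inner_comm] at h
  simp_rw [← ENNReal.ofReal_pow (abs_nonneg _)] at h_fin ⊢
  have h_nonneg : ∀ᵐ ω ∂P, 0 ≤ |⟪θ, X ω⟫| ^ k := .of_forall fun ω => by positivity
  have h_int : Integrable (fun ω => |⟪θ, X ω⟫| ^ k) P :=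
    ⟨by fun_prop, (hasFiniteIntegral_iff_ofReal h_nonneg).2 h_fin.lt_top⟩
  rw [← ofReal_integral_eq_lintegral_ofReal h_int h_nonneg]
  have h_root_nonneg : 0 ≤ (∫ ω, |⟪θ, X ω⟫| ^ k ∂P) ^ (1 / (k : ℝ)) :=
    rpow_nonneg (integral_nonneg_of_ae h_nonneg) _
  rw [← ENNReal.ofReal_pow (h_root_nonneg.trans h)]
  refine ENNReal.ofReal_le_ofReal ((rpow_inv_natCast_pow (integral_nonneg_of_ae h_nonneg)
    (by omega : k ≠ 0)).symm.trans_le ?_)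
  rw [← one_div]
  exact pow_le_pow_left₀ h_root_nonneg h k

lemma Isotropic.isCenteredOfVariance_map_mApp [IsFiniteMeasure P] (hX : Isotropic P X)
    (hX_meas : Measurable X) (A : Matrix (Fin n) (Fin n) ℝ) :
    IsCenteredOfVariance ((P.map X).map (mApp A)) (hsNorm A ^ 2) := by
  set T := LinearMap.toContinuousLinearMap (Matrix.toEuclideanLin A)
  have hT : mApp A = T := rfl
  have h_meas : Measurable (T ∘ X) := T.measurable.comp hX_meas
  have h_memLp : MemLp X 2 P := hX.memLp_two hX_meas.aestronglyMeasurable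
  rw [hT, Measure.map_map T.measurable hX_meas]
  refine ⟨(memLp_map_measure_iff (by fun_prop) h_meas.aemeasurable).2
    (T.comp_memLp' h_memLp), ?_, ?_⟩
  · rw [integral_map h_meas.aemeasurable (by fun_prop)]
    exact (T.integral_comp_comm (h_memLp.integrable one_le_two)).trans (by rw [hX.1, map_zero])
  · rw [integral_map h_meas.aemeasurable (by fun_prop)]
    exact hX.integral_norm_mApp_sq A

end Isotropic

/-! ### Symmetrization -/

lemma lintegral_pow_le_lintegral_pow {α : Type*} [MeasurableSpace α] {μ : Measure α}
    [IsProbabilityMeasure μ] {g : α → ℝ≥0∞} (hg : Measurable g) {p : ℕ} (hp : p ≠ 0) :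
    (∫⁻ y, g y ∂μ) ^ p ≤ ∫⁻ y, g y ^ p ∂μ := by
  have h := eLpNorm'_le_eLpNorm'_of_exponent_le (q := p) one_pos
    (by exact_mod_cast Nat.one_le_iff_ne_zero.2 hp) μ hg.aestronglyMeasurable
  simp only [eLpNorm', enorm_eq_self, ENNReal.rpow_one, div_one, one_div,
    ENNReal.rpow_natCast] at h
  rwa [ENNReal.le_rpow_inv_iff (by positivity), ENNReal.rpow_natCast] at h

section Symmetrization

/-- The law of `Y - Y'`, where `Y` and `Y'` are independent with law `μ`. -/
def symmetrization {E : Type*} [AddGroup E] [MeasurableSpace E] (μ : Measure E) : Measure E :=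
  (μ.prod μ).map fun z => z.1 - z.2

variable {E : Type*} [NormedAddCommGroup E] [InnerProductSpace ℝ E] [MeasurableSpace E]
  [BorelSpace E] [SecondCountableTopology E] {μ : Measure E} {N α B : ℝ}

instance [IsProbabilityMeasure μ] : IsProbabilityMeasure (symmetrization μ) :=
  Measure.isProbabilityMeasure_map (by fun_prop)

instance [SFinite μ] : (symmetrization μ).IsNegInvariant where
  neg_eq_self := by
    have h_swap : (μ.prod μ).map (fun z => -(z.1 - z.2)) =
        ((μ.prod μ).map Prod.swap).map fun z => z.1 - z.2 := by
      rw [Measure.map_map (by fun_prop) measurable_swap]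
      simp only [Function.comp_def, Prod.fst_swap, Prod.snd_swap, neg_sub]
    rw [Measure.neg, symmetrization, Measure.map_map measurable_neg (by fun_prop)]
    exact h_swap.trans (by rw [Measure.prod_swap])

omit [InnerProductSpace ℝ E] in
lemma lintegral_symmetrization [SFinite μ] {g : E → ℝ≥0∞} (hg : Measurable g) :
    ∫⁻ y, g y ∂(symmetrization μ) = ∫⁻ x, ∫⁻ y, g (x - y) ∂μ ∂μ := by
  rw [symmetrization, lintegral_map hg (by fun_prop), lintegral_prod _ (by fun_prop)]

lemma PrekopaLeindler.symmetrization [SFinite μ] (hμ : PrekopaLeindler μ) :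
    PrekopaLeindler (symmetrization μ) :=
  PrekopaLeindlerWith.map (f := LinearMap.fst ℝ E E - LinearMap.snd ℝ E E)
    (PrekopaLeindlerWith.prod hμ hμ) (measurable_fst.sub measurable_snd) fun _ _ =>
      (mul_one 1).ge

lemma HasPsiMoments.symmetrization [IsProbabilityMeasure μ] (hψ : HasPsiMoments μ α B) :
    HasPsiMoments (symmetrization μ) α (2 * B) := fun k hk v => by
  obtain ⟨m, rfl⟩ : ∃ m, k = m + 1 := ⟨k - 1, by omega⟩
  rw [lintegral_symmetrization (by fun_prop)]
  set I := ∫⁻ y, ENNReal.ofReal |⟪v, y⟫| ^ (m + 1) ∂μ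
  have h_add : ∀ x y : E, ENNReal.ofReal |⟪v, x - y⟫| ^ (m + 1) ≤
      2 ^ m * (ENNReal.ofReal |⟪v, x⟫| ^ (m + 1) + ENNReal.ofReal |⟪v, y⟫| ^ (m + 1)) := by
    intro x y
    rw [inner_sub_right, sub_eq_add_neg, ← abs_neg ⟪v, y⟫]
    exact ofReal_abs_add_pow_le _ _ _
  calc ∫⁻ x, ∫⁻ y, ENNReal.ofReal |⟪v, x - y⟫| ^ (m + 1) ∂μ ∂μ
      ≤ ∫⁻ x, ∫⁻ y, 2 ^ m * (ENNReal.ofReal |⟪v, x⟫| ^ (m + 1) +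
          ENNReal.ofReal |⟪v, y⟫| ^ (m + 1)) ∂μ ∂μ :=
        lintegral_mono fun x => lintegral_mono fun y => h_add x y
    _ = ∫⁻ x, 2 ^ m * (ENNReal.ofReal |⟪v, x⟫| ^ (m + 1) + I) ∂μ := by
        refine lintegral_congr fun x => ?_
        rw [lintegral_const_mul _ (by fun_prop), lintegral_add_left (by fun_prop),
          lintegral_const, measure_univ, mul_one]
    _ = 2 ^ (m + 1) * I := by
        rw [lintegral_const_mul _ (by fun_prop), lintegral_add_right _ (by fun_prop),
          lintegral_const, measure_univ, mul_one, ← two_mul, pow_succ, mul_assoc]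
    _ ≤ 2 ^ (m + 1) * ENNReal.ofReal (B * (m + 1 : ℕ) ^ (1 / α) * ‖v‖) ^ (m + 1) := by
        gcongr
        exact hψ _ hk v
    _ = _ := by
        rw [← mul_pow, mul_assoc, mul_assoc, mul_assoc 2, ENNReal.ofReal_mul zero_le_two,
          ENNReal.ofReal_ofNat]

variable [CompleteSpace E]

omit [BorelSpace E] [SecondCountableTopology E] in
lemma IsCenteredOfVariance.lintegral_add_norm_sub_sq [IsProbabilityMeasure μ]
    (hμ : IsCenteredOfVariance μ N) {a : ℝ} (ha : 0 ≤ a) (x : E) :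
    ∫⁻ y, ENNReal.ofReal (a + ‖x - y‖ ^ 2) ∂μ = ENNReal.ofReal (a + N + ‖x‖ ^ 2) := by
  have h_expand : ∀ y, a + ‖x - y‖ ^ 2 = a + ‖x‖ ^ 2 - 2 * ⟪x, y⟫ + ‖y‖ ^ 2 := fun y => by
    rw [norm_sub_sq_real]
    ring
  have h_id : Integrable (fun y => y) μ := hμ.memLp.integrable one_le_two
  have h_sq : Integrable (fun y => ‖y‖ ^ 2) μ := hμ.memLp.integrable_norm_pow two_ne_zero
  have h_inner : Integrable (fun y => 2 * ⟪x, y⟫) μ := (h_id.const_inner x).const_mul 2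
  have h_affine : Integrable (fun y => a + ‖x‖ ^ 2 - 2 * ⟪x, y⟫) μ :=
    (integrable_const _).sub h_inner
  rw [← ofReal_integral_eq_lintegral_ofReal
    ((h_affine.add h_sq).congr (.of_forall fun y => (h_expand y).symm))
    (.of_forall fun y => by positivity)]
  simp_rw [h_expand]
  rw [integral_add h_affine h_sq, integral_sub (integrable_const _) h_inner, integral_const_mul,
    integral_inner h_id, hμ.integral_eq_zero, hμ.integral_norm_sq, inner_zero_right,
    integral_const, probReal_univ, one_smul]
  congr 1
  ring

omit [InnerProductSpace ℝ E] [CompleteSpace E] in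
lemma regularizedMoment_symmetrization_eq [SFinite μ] (hN : 0 ≤ N) (p : ℕ) :
    regularizedMoment N (symmetrization μ) (2 * p) =
      ∫⁻ x, ∫⁻ y, ENNReal.ofReal (N + ‖x - y‖ ^ 2) ^ p ∂μ ∂μ := by
  rw [regularizedMoment, lintegral_symmetrization (by fun_prop)]
  simp_rw [pow_mul, ← ENNReal.ofReal_pow (sqrt_nonneg _)]
  refine lintegral_congr fun x => lintegral_congr fun y => ?_
  rw [sq_sqrt (by positivity)]

lemma IsCenteredOfVariance.regularizedMoment_symmetrization_two [IsProbabilityMeasure μ]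
    (hμ : IsCenteredOfVariance μ N) (hN : 0 ≤ N) :
    regularizedMoment N (symmetrization μ) 2 = ENNReal.ofReal (3 * N) := by
  have h := hμ.lintegral_add_norm_sub_sq (add_nonneg hN hN) 0
  simp_rw [zero_sub, norm_neg, norm_zero] at h
  refine (regularizedMoment_symmetrization_eq hN 1).trans ?_
  simp_rw [pow_one, hμ.lintegral_add_norm_sub_sq hN, h]
  congr 1
  ring

/- Jensen's inequality in the second variable removes the symmetrization. -/
lemma IsCenteredOfVariance.lintegral_pow_le_regularizedMoment [IsProbabilityMeasure μ]
    (hμ : IsCenteredOfVariance μ N) (hN : 0 ≤ N) {p : ℕ} (hp : p ≠ 0) :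
    ∫⁻ x, ENNReal.ofReal (2 * N + ‖x‖ ^ 2) ^ p ∂μ ≤
      regularizedMoment N (symmetrization μ) (2 * p) := by
  rw [regularizedMoment_symmetrization_eq hN]
  refine lintegral_mono fun x => ?_
  rw [two_mul, ← hμ.lintegral_add_norm_sub_sq hN]
  exact lintegral_pow_le_lintegral_pow (by fun_prop) hp

lemma IsCenteredOfVariance.measure_mul_pow_le_regularizedMoment [IsProbabilityMeasure μ]
    (hμ : IsCenteredOfVariance μ N) (hN : 0 ≤ N) {p : ℕ} (hp : p ≠ 0) {t : ℝ} (ht : 0 ≤ t) :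
    ENNReal.ofReal ((2 + (1 + t) ^ 2) * N) ^ p * μ {y | (1 + t) * √N ≤ ‖y‖} ≤
      regularizedMoment N (symmetrization μ) (2 * p) := by
  refine le_trans ?_ (hμ.lintegral_pow_le_regularizedMoment hN hp)
  refine le_trans ?_ (mul_meas_ge_le_lintegral₀ (by fun_prop)
    (ENNReal.ofReal ((2 + (1 + t) ^ 2) * N) ^ p))
  refine mul_le_mul_right (measure_mono fun y hy => ?_) _
  have h_sq : ((1 + t) * √N) ^ 2 ≤ ‖y‖ ^ 2 := pow_le_pow_left₀ (by positivity) hy 2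
  rw [mul_pow, sq_sqrt hN] at h_sq
  rw [Set.mem_ofPred_eq]
  gcongr
  linarith

end Symmetrization

/-! ### Iterating the reverse Hölder inequality -/

section Iteration

variable {E : Type*} [NormedAddCommGroup E] [InnerProductSpace ℝ E] [FiniteDimensional ℝ E]
  [MeasurableSpace E] [BorelSpace E] {μ : Measure E} {N α B r : ℝ}

/- The dimension `k ≈ p / r` balances the two error terms of `regularizedMoment_two_mul_le`. -/
lemma exists_nat_rpow_sq_le {M p : ℝ} (hM : 0 ≤ M) (hα : 1 ≤ α) (hr : 0 < r)
    (hrp : r ≤ p) (h : p = M ^ (α / 2) * r ^ (1 + α)) :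
    ∃ k : ℕ, p / r ≤ k ∧ k ≤ 2 * (p / r) ∧ ((k : ℝ) ^ (1 / α)) ^ 2 ≤ 4 * (M * r ^ 2) := by
  have hα_pos : 0 < α := one_pos.trans_le hα
  have h_one : 1 ≤ p / r := (one_le_div hr).2 hrp
  have h_quot : p / r = (M * r ^ 2) ^ (α / 2) := by
    rw [h, rpow_add hr, rpow_one, mul_rpow hM (by positivity), ← rpow_natCast r 2,
      ← rpow_mul hr.le, Nat.cast_ofNat, mul_div_cancel₀ _ two_ne_zero]
    field_simp
  have h_ceil : (⌈p / r⌉₊ : ℝ) ≤ 2 * (p / r) := by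
    have := (Nat.ceil_lt_add_one (zero_le_one.trans h_one)).le
    linarith
  refine ⟨⌈p / r⌉₊, Nat.le_ceil _, h_ceil, ?_⟩
  calc ((⌈p / r⌉₊ : ℝ) ^ (1 / α)) ^ 2 ≤ ((2 * (p / r)) ^ (1 / α)) ^ 2 := by gcongr
    _ = (2 ^ (1 / α)) ^ 2 * (M * r ^ 2) := by
        rw [mul_rpow zero_le_two (by positivity), mul_pow, h_quot, ← rpow_mul (by positivity),
          ← rpow_natCast (_ ^ (α / 2 * _)), ← rpow_mul (by positivity),
          show α / 2 * (1 / α) * (2 : ℕ) = 1 by push_cast; field_simp, rpow_one]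
    _ ≤ (2 ^ (1 : ℝ)) ^ 2 * (M * r ^ 2) := by
        gcongr
        exacts [one_le_two, (div_le_one hα_pos).2 hα]
    _ = 4 * (M * r ^ 2) := by
        rw [rpow_one]
        norm_num

variable [IsProbabilityMeasure μ]

lemma regularizedMoment_symmetrization_two_mul_le (h_pl : PrekopaLeindler μ)
    (hψ : HasPsiMoments μ α B) (hN : 0 < N) (hB : 0 < B) (hα : 1 ≤ α) {p : ℕ} (hp : 1 ≤ p)
    (hr : 0 < r) (hr_le : r ≤ 1 / 2 ^ 9) (h : (p : ℝ) = (N / B ^ 2) ^ (α / 2) * r ^ (1 + α)) :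
    regularizedMoment N (symmetrization μ) (2 * p) ≤
      ENNReal.ofReal (exp (2 ^ 26 * (p * r))) *
        regularizedMoment N (symmetrization μ) p ^ 2 := by
  have hp_real : (1 : ℝ) ≤ p := by exact_mod_cast hp
  obtain ⟨k, hk_ge, hk_le, hk_rpow⟩ :=
    exists_nat_rpow_sq_le (by positivity) hα hr (by linarith) h
  have hpk_real : 2 * (p : ℝ) ≤ k := by
    refine le_trans ?_ hk_ge
    rw [le_div_iff₀ hr]
    nlinarith
  have hk : 0 < (k : ℝ) := by linarith
  have hpk : 2 * p ≤ k := by exact_mod_cast hpk_real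
  set L := 2 * B * (k : ℝ) ^ (1 / α) with hL
  have hL_sq : L ^ 2 ≤ 16 * (N * r ^ 2) := by
    calc L ^ 2 = 4 * B ^ 2 * ((k : ℝ) ^ (1 / α)) ^ 2 := by
          rw [hL]
          ring
      _ ≤ 4 * B ^ 2 * (4 * (N / B ^ 2 * r ^ 2)) := by gcongr
      _ = 16 * (N * r ^ 2) := by
          field_simp
          ring
  have hr_sq : r ^ 2 ≤ 1 / 2 ^ 18 := (pow_le_pow_left₀ hr.le hr_le 2).trans_eq (by norm_num)
  refine (regularizedMoment_two_mul_le hN h_pl.symmetrization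
    (hψ.symmetrization.lintegral_abs_inner_pow_ne_top h_pl.symmetrization) hp (by omega)
    (by omega) (by positivity) (hψ.symmetrization k (by omega)) (by nlinarith)).trans ?_
  gcongr
  have h_perturb : 1310720 * L ^ 2 * k / N ≤ 41943040 * (p * r) := by
    rw [div_le_iff₀ hN]
    calc 1310720 * L ^ 2 * k ≤ 1310720 * (16 * (N * r ^ 2)) * (2 * (p / r)) := by gcongr
      _ = 41943040 * (p * r) * N := by
          field_simp
          ring
  have h_curvature : 2 * (p : ℝ) ^ 2 / k ≤ 2 * (p * r) := by
    rw [div_le_iff₀ hk]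
    calc 2 * (p : ℝ) ^ 2 = 2 * (p * r) * (p / r) := by field_simp
      _ ≤ 2 * (p * r) * k := by gcongr
  have : 0 < p * r := by positivity
  linarith

lemma exists_rpow_one_add_eq_div_two (hα : 0 ≤ α) (hα_le : α ≤ 2) (hr : 0 < r) :
    ∃ s, 0 < s ∧ s ≤ 4 / 5 * r ∧ s ^ (1 + α) = r ^ (1 + α) / 2 := by
  have h_exp : 0 < 1 + α := by positivity
  refine ⟨(2⁻¹) ^ (1 + α)⁻¹ * r, by positivity, ?_, ?_⟩
  · gcongr
    rw [rpow_inv_le_iff_of_pos (by norm_num) (by norm_num) h_exp]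
    calc (2⁻¹ : ℝ) ≤ (4 / 5) ^ (3 : ℝ) := by norm_num
      _ ≤ (4 / 5) ^ (1 + α) :=
          rpow_le_rpow_of_exponent_ge (by norm_num) (by norm_num) (by linarith)
  · rw [mul_rpow (by positivity) hr.le, rpow_inv_rpow (by norm_num) h_exp.ne']
    ring

theorem regularizedMoment_symmetrization_two_pow_le (h_pl : PrekopaLeindler μ)
    (hμ : IsCenteredOfVariance μ N) (hψ : HasPsiMoments μ α B) (hN : 0 < N) (hB : 0 < B)
    (hα : 1 ≤ α) (hα_le : α ≤ 2) (j : ℕ) (hr : 0 < r) (hr_le : r ≤ 1 / 2 ^ 9)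
    (h : 2 * 2 ^ j = (N / B ^ 2) ^ (α / 2) * r ^ (1 + α)) :
    regularizedMoment N (symmetrization μ) (2 * 2 ^ j) ≤
      ENNReal.ofReal (exp (2 ^ 28 * (2 ^ j * r))) * ENNReal.ofReal (3 * N) ^ 2 ^ j := by
  induction j generalizing r with
  | zero =>
    rw [pow_zero, pow_one, mul_one, hμ.regularizedMoment_symmetrization_two hN.le]
    exact le_mul_of_one_le_left' (ENNReal.one_le_ofReal.2 (one_le_exp (by positivity)))
  | succ j ih =>
    obtain ⟨s, hs, hs_le, hs_rpow⟩ := exists_rpow_one_add_eq_div_two (by linarith) hα_le hr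
    have hs_eq : 2 * 2 ^ j = (N / B ^ 2) ^ (α / 2) * s ^ (1 + α) := by
      rw [hs_rpow, mul_div_assoc', ← h, pow_succ]
      ring
    have h_step := regularizedMoment_symmetrization_two_mul_le (p := 2 * 2 ^ j) h_pl hψ hN hB hα
      (Nat.one_le_iff_ne_zero.2 (by positivity)) hs (by linarith) (by exact_mod_cast hs_eq)
    have h_prev := ih hs (by linarith) hs_eq
    push_cast at h_step
    rw [pow_succ' 2 j]
    calc regularizedMoment N (symmetrization μ) (2 * (2 * 2 ^ j))
        ≤ ENNReal.ofReal (exp (2 ^ 26 * (2 * 2 ^ j * s))) *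
          (ENNReal.ofReal (exp (2 ^ 28 * (2 ^ j * s))) *
            ENNReal.ofReal (3 * N) ^ 2 ^ j) ^ 2 := by
          refine h_step.trans ?_
          gcongr
      _ = ENNReal.ofReal (exp (2 ^ 26 * (2 * 2 ^ j * s) + 2 ^ 29 * (2 ^ j * s))) *
          ENNReal.ofReal (3 * N) ^ (2 * 2 ^ j) := by
          rw [mul_pow, ← pow_mul', ← mul_assoc, ← ENNReal.ofReal_pow (exp_pos _).le,
            ← exp_nat_mul, ← ENNReal.ofReal_mul (exp_pos _).le, ← exp_add]
          congr 4
          push_cast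
          ring
      _ ≤ _ := by
          gcongr
          have := mul_le_mul_of_nonneg_left hs_le (show (0 : ℝ) ≤ 2 ^ j by positivity)
          rw [pow_succ' (2 : ℝ) j]
          linarith

end Iteration

/-! ### Tail estimates -/

section Tail

variable {E : Type*} [NormedAddCommGroup E] [InnerProductSpace ℝ E] [FiniteDimensional ℝ E]
  [MeasurableSpace E] [BorelSpace E] {μ : Measure E} [IsProbabilityMeasure μ] {N α B t : ℝ}

lemma three_mul_exp_le (ht : 0 ≤ t) (ht_le : t ≤ 1) :
    3 * exp (2 * t / 5) ≤ 2 + (1 + t) ^ 2 := by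
  have h_pos : 0 < 1 - 2 * t / 5 := by linarith
  have h_exp : exp (2 * t / 5) ≤ (1 - 2 * t / 5)⁻¹ := by
    rw [← inv_inv (exp _), ← exp_neg]
    exact inv_anti₀ h_pos (one_sub_le_exp_neg _)
  have h_inv : (1 - 2 * t / 5)⁻¹ ≤ 1 + 2 * t / 3 := by
    rw [inv_le_iff_one_le_mul₀ h_pos]
    nlinarith
  nlinarith

lemma IsCenteredOfVariance.measure_le_of_regularizedMoment_le
    (hμ : IsCenteredOfVariance μ N) (hN : 0 < N) (ht : 0 ≤ t) (ht_le : t ≤ 1) {p : ℕ}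
    (hp : p ≠ 0) {D : ℝ} (hD : regularizedMoment N (symmetrization μ) (2 * p) ≤
      ENNReal.ofReal (exp D) * ENNReal.ofReal (3 * N) ^ p) :
    μ {y | (1 + t) * √N ≤ ‖y‖} ≤ ENNReal.ofReal (exp (D - 2 * p * t / 5)) := by
  have h_base : exp (2 * t / 5) * (3 * N) ≤ (2 + (1 + t) ^ 2) * N := by
    rw [← mul_assoc, mul_comm (exp _)]
    gcongr
    exact three_mul_exp_le ht ht_le
  have h_pow : ENNReal.ofReal (exp (2 * p * t / 5)) * ENNReal.ofReal (3 * N) ^ p ≤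
      ENNReal.ofReal ((2 + (1 + t) ^ 2) * N) ^ p := by
    rw [show 2 * p * t / 5 = p * (2 * t / 5) by ring, exp_nat_mul,
      ENNReal.ofReal_pow (exp_pos _).le, ← mul_pow, ← ENNReal.ofReal_mul (exp_pos _).le]
    gcongr
  have h_ne_zero : ENNReal.ofReal (3 * N) ^ p ≠ 0 := by positivity
  rw [exp_sub, ENNReal.ofReal_div_of_pos (exp_pos _), ENNReal.le_div_iff_mul_le
    (.inl (ENNReal.ofReal_pos.2 (exp_pos _)).ne') (.inl ENNReal.ofReal_ne_top)]
  refine (ENNReal.mul_le_mul_iff_left h_ne_zero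
    (ENNReal.pow_ne_top ENNReal.ofReal_ne_top)).1 ?_
  rw [mul_assoc]
  calc μ {y | (1 + t) * √N ≤ ‖y‖} *
        (ENNReal.ofReal (exp (2 * p * t / 5)) * ENNReal.ofReal (3 * N) ^ p)
      ≤ μ {y | (1 + t) * √N ≤ ‖y‖} * ENNReal.ofReal ((2 + (1 + t) ^ 2) * N) ^ p := by gcongr
    _ = _ := mul_comm _ _
    _ ≤ _ := (hμ.measure_mul_pow_le_regularizedMoment hN.le hp ht).trans hD

lemma exists_two_pow_eq_mul_rpow {x : ℝ} (hx : 0 < x) (hα : 0 ≤ α) (hα_le : α ≤ 2) (ht : 0 ≤ t)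
    (h : 2 ≤ x * t ^ (1 + α) / 2 ^ 93) :
    ∃ (j : ℕ) (r : ℝ), 0 < r ∧ r ≤ t / 2 ^ 31 ∧ 2 * 2 ^ j = x * r ^ (1 + α) ∧
      x * t ^ (1 + α) / 2 ^ 93 ≤ 2 * (2 * 2 ^ j) := by
  have h_exp : 0 < 1 + α := by positivity
  obtain ⟨j, hj_le, hj_lt⟩ :=
    exists_nat_pow_near (x := x * t ^ (1 + α) / 2 ^ 93 / 2) (y := 2) (by linarith) one_lt_two
  rw [pow_succ' (2 : ℝ) j] at hj_lt
  refine ⟨j, (2 * 2 ^ j / x) ^ (1 + α)⁻¹, by positivity, ?_, ?_, by linarith⟩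
  · rw [rpow_inv_le_iff_of_pos (by positivity) (by positivity) h_exp, div_rpow ht (by positivity),
      div_le_iff₀ hx]
    calc (2 * 2 ^ j : ℝ) ≤ x * t ^ (1 + α) / (2 ^ 31) ^ 3 := by
          norm_num at hj_le ⊢
          linarith
      _ ≤ x * t ^ (1 + α) / (2 ^ 31) ^ (1 + α) := by
          rw [← rpow_natCast (2 ^ 31) 3]
          gcongr
          · norm_num
          · push_cast
            linarith
      _ = t ^ (1 + α) / (2 ^ 31) ^ (1 + α) * x := by ring
  · rw [rpow_inv_rpow (by positivity) h_exp.ne', mul_div_cancel₀ _ hx.ne']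

lemma measure_norm_ge_le_of_le_one (h_pl : PrekopaLeindler μ) (hμ : IsCenteredOfVariance μ N)
    (hψ : HasPsiMoments μ α B) (hN : 0 < N) (hB : 0 < B) (hα : 1 ≤ α) (hα_le : α ≤ 2)
    (ht : 0 ≤ t) (ht_le : t ≤ 1) :
    μ {y | (1 + t) * √N ≤ ‖y‖} ≤
      ENNReal.ofReal (exp (-((N / B ^ 2) ^ (α / 2) * t ^ (2 + α) / 2 ^ 97))) := by
  set x := (N / B ^ 2) ^ (α / 2)
  set y := x * t ^ (1 + α) / 2 ^ 93 with hy
  have h_exponent : x * t ^ (2 + α) / 2 ^ 97 = y * t / 16 := by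
    rw [hy, show 2 + α = 1 + α + 1 by ring, rpow_add_one' ht (by linarith)]
    ring
  rw [h_exponent]
  rcases lt_or_ge y 2 with h | h
  · refine (hμ.measure_le_of_regularizedMoment_le hN ht ht_le one_ne_zero (D := 0) ?_).trans ?_
    · rw [mul_one, hμ.regularizedMoment_symmetrization_two hN.le, exp_zero, ENNReal.ofReal_one,
        one_mul, pow_one]
    · gcongr
      push_cast
      nlinarith
  · obtain ⟨j, r, hr, hr_le, h_eq, h_le⟩ :=
      exists_two_pow_eq_mul_rpow (by positivity) (by linarith) hα_le ht h
    refine (hμ.measure_le_of_regularizedMoment_le hN ht ht_le (by positivity)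
      (regularizedMoment_symmetrization_two_pow_le h_pl hμ hψ hN hB hα hα_le j hr (by linarith)
        h_eq)).trans ?_
    gcongr
    push_cast
    have h_error : 2 ^ 28 * (2 ^ j * r) ≤ 2 * 2 ^ j * t / 16 := by
      calc 2 ^ 28 * (2 ^ j * r) ≤ 2 ^ 28 * (2 ^ j * (t / 2 ^ 31)) := by gcongr
        _ = 2 * 2 ^ j * t / 16 := by ring
    nlinarith

end Tail

/-! ### Borell's lemma -/

section Borell

variable {E : Type*} [NormedAddCommGroup E] [InnerProductSpace ℝ E] [MeasurableSpace E]
  {μ : Measure E} {N R e s t : ℝ}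

lemma PrekopaLeindler.measure_mul_measure_le_sq (hμ : PrekopaLeindler μ) {s t u : Set E}
    (hs : MeasurableSet s) (ht : MeasurableSet t) (hu : MeasurableSet u)
    (h : ∀ x ∈ s, ∀ y ∈ t, midpoint ℝ x y ∈ u) : μ s * μ t ≤ μ u ^ 2 := by
  have h_pl := hμ (s.indicator 1) (t.indicator 1) (u.indicator 1) (measurable_one.indicator hs)
    (measurable_one.indicator ht) (measurable_one.indicator hu) fun x y => ?_
  · rwa [lintegral_indicator_one hs, lintegral_indicator_one ht,
      lintegral_indicator_one hu] at h_pl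
  · by_cases hxy : x ∈ s ∧ y ∈ t
    · simp [hxy, h x hxy.1 y hxy.2]
    · rcases not_and_or.1 hxy with hx | hy
      · simp [hx]
      · simp [hy]

variable [BorelSpace E]

lemma PrekopaLeindler.measureReal_norm_ge_mul_le_sq [IsFiniteMeasure μ] (hμ : PrekopaLeindler μ)
    (R a : ℝ) :
    μ.real {y | 2 * a + R ≤ ‖y‖} * μ.real {y | ‖y‖ < R} ≤ μ.real {y | a ≤ ‖y‖} ^ 2 := by
  have h := hμ.measure_mul_measure_le_sq (measurableSet_le measurable_const measurable_norm)
    (measurableSet_lt measurable_norm measurable_const)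
    (measurableSet_le measurable_const measurable_norm) (u := {y : E | a ≤ ‖y‖})
    fun x (hx : 2 * a + R ≤ ‖x‖) y (hy : ‖y‖ < R) => ?_
  · simpa only [measureReal_def, ENNReal.toReal_mul, ENNReal.toReal_pow] using
      ENNReal.toReal_mono (ENNReal.pow_ne_top (measure_ne_top _ _)) h
  · have h_tri : ‖x‖ ≤ ‖x + y‖ + ‖y‖ := by simpa using norm_sub_le (x + y) y
    rw [Set.mem_ofPred_eq, midpoint_eq_smul_add, norm_smul, invOf_eq_inv, norm_inv,
      Real.norm_ofNat]
    linarith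

lemma PrekopaLeindler.measureReal_norm_ge_le_pow [IsFiniteMeasure μ] (hμ : PrekopaLeindler μ)
    (h_pos : 0 < μ.real {y | ‖y‖ < R})
    (h : μ.real {y | R ≤ ‖y‖} ≤ μ.real {y | ‖y‖ < R} * e) (j : ℕ) :
    μ.real {y | (2 ^ (j + 1) - 1) * R ≤ ‖y‖} ≤ μ.real {y | ‖y‖ < R} * e ^ 2 ^ j := by
  induction j with
  | zero =>
    norm_num
    exact h
  | succ j ih =>
    have h_step := hμ.measureReal_norm_ge_mul_le_sq R ((2 ^ (j + 1) - 1) * R)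
    rw [show 2 * ((2 ^ (j + 1) - 1) * R) + R = (2 ^ (j + 1 + 1) - 1) * R by ring] at h_step
    refine le_of_mul_le_mul_right (h_step.trans ?_) h_pos
    calc μ.real {y | (2 ^ (j + 1) - 1) * R ≤ ‖y‖} ^ 2
        ≤ (μ.real {y | ‖y‖ < R} * e ^ 2 ^ j) ^ 2 := by gcongr
      _ = μ.real {y | ‖y‖ < R} * e ^ 2 ^ (j + 1) * μ.real {y | ‖y‖ < R} := by ring

omit [BorelSpace E] in
lemma IsCenteredOfVariance.measureReal_norm_ge_le_quarter (hμ : IsCenteredOfVariance μ N)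
    (hN : 0 < N) : μ.real {y | 2 * √N ≤ ‖y‖} ≤ 1 / 4 := by
  have h_markov := mul_meas_ge_le_integral_of_nonneg (μ := μ) (f := fun y => ‖y‖ ^ 2)
    (.of_forall fun y => by positivity) (hμ.memLp.integrable_norm_pow two_ne_zero) (4 * N)
  rw [hμ.integral_norm_sq] at h_markov
  have h_set : {y : E | 2 * √N ≤ ‖y‖} = {y | 4 * N ≤ ‖y‖ ^ 2} := by
    ext y
    rw [Set.mem_ofPred_eq, Set.mem_ofPred_eq, ← pow_le_pow_iff_left₀ (by positivity)
      (norm_nonneg y) two_ne_zero, mul_pow, sq_sqrt hN.le]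
    norm_num
  rw [h_set]
  nlinarith

lemma measureReal_norm_ge_le_of_one_le [IsProbabilityMeasure μ] (h_pl : PrekopaLeindler μ)
    (hμ : IsCenteredOfVariance μ N) (hN : 0 < N) (hs : 0 ≤ s)
    (h : μ.real {y | 2 * √N ≤ ‖y‖} ≤ exp (-s)) (ht : 1 ≤ t) :
    μ.real {y | (1 + t) * √N ≤ ‖y‖} ≤ exp (-(s * t / 16)) := by
  have h_quarter := hμ.measureReal_norm_ge_le_quarter hN
  have h_compl : μ.real {y | ‖y‖ < 2 * √N} = 1 - μ.real {y | 2 * √N ≤ ‖y‖} := by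
    rw [← probReal_compl_eq_one_sub (measurableSet_le measurable_const measurable_norm)]
    congr 1
    ext y
    simp
  set q := μ.real {y | 2 * √N ≤ ‖y‖}
  have h_sqrt : q ≤ 1 / 2 * exp (-(s / 2)) := by
    refine (pow_le_pow_iff_left₀ measureReal_nonneg (by positivity) two_ne_zero).1 ?_
    calc q ^ 2 ≤ 1 / 4 * exp (-s) := by
          rw [sq]
          gcongr
      _ = (1 / 2 * exp (-(s / 2))) ^ 2 := by
          rw [mul_pow, ← exp_nat_mul]
          congr 1
          · norm_num
          · congr 1
            push_cast
            ring
  have h_start : q ≤ (1 - q) * exp (-(s / 2)) := h_sqrt.trans (by gcongr; linarith)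
  rw [← h_compl] at h_start
  obtain ⟨j, hj_le, hj_lt⟩ :=
    exists_nat_pow_near (x := (3 + t) / 4) (y := 2) (by linarith) one_lt_two
  rw [pow_succ'] at hj_lt
  calc μ.real {y | (1 + t) * √N ≤ ‖y‖}
      ≤ μ.real {y | (2 ^ (j + 1) - 1) * (2 * √N) ≤ ‖y‖} := by
        refine measureReal_mono (Set.ofPred_subset_ofPred.2 fun y hy => hy.trans' ?_)
        rw [← mul_assoc, pow_succ']
        gcongr
        linarith
    _ ≤ μ.real {y | ‖y‖ < 2 * √N} * exp (-(s / 2)) ^ 2 ^ j :=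
        h_pl.measureReal_norm_ge_le_pow (by linarith) h_start j
    _ ≤ exp (-(s / 2)) ^ 2 ^ j := mul_le_of_le_one_left (by positivity) measureReal_le_one
    _ ≤ exp (-(s * t / 16)) := by
        rw [← exp_nat_mul]
        gcongr
        push_cast
        nlinarith

end Borell

theorem measure_norm_ge_le {E : Type*} [NormedAddCommGroup E] [InnerProductSpace ℝ E]
    [FiniteDimensional ℝ E] [MeasurableSpace E] [BorelSpace E] {μ : Measure E}
    [IsProbabilityMeasure μ] {N α B t : ℝ} (h_pl : PrekopaLeindler μ)
    (hμ : IsCenteredOfVariance μ N) (hψ : HasPsiMoments μ α B) (hN : 0 < N) (hB : 0 < B)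
    (hα : 1 ≤ α) (hα_le : α ≤ 2) (ht : 0 ≤ t) :
    μ {y | (1 + t) * √N ≤ ‖y‖} ≤
      ENNReal.ofReal (exp (-(1 / 2 ^ 101 * (N / B ^ 2) ^ (α / 2) * min (t ^ (2 + α)) t))) := by
  rcases le_total t 1 with ht_one | ht_one
  · refine (measure_norm_ge_le_of_le_one h_pl hμ hψ hN hB hα hα_le ht ht_one).trans ?_
    gcongr
    calc 1 / 2 ^ 101 * (N / B ^ 2) ^ (α / 2) * min (t ^ (2 + α)) t
        ≤ 1 / 2 ^ 97 * (N / B ^ 2) ^ (α / 2) * t ^ (2 + α) := by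
          gcongr
          · norm_num
          · norm_num
          · exact min_le_left _ _
      _ = _ := by ring
  · have h_one := measure_norm_ge_le_of_le_one h_pl hμ hψ hN hB hα hα_le zero_le_one le_rfl
    rw [one_rpow, mul_one, one_add_one_eq_two] at h_one
    have h_large := measureReal_norm_ge_le_of_one_le h_pl hμ hN (by positivity)
      (ENNReal.toReal_le_of_le_ofReal (exp_pos _).le h_one) ht_one
    rw [← ofReal_measureReal]
    refine (ENNReal.ofReal_le_ofReal h_large).trans ?_
    gcongr
    calc 1 / 2 ^ 101 * (N / B ^ 2) ^ (α / 2) * min (t ^ (2 + α)) t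
        ≤ 1 / 2 ^ 101 * (N / B ^ 2) ^ (α / 2) * t := by
          gcongr
          exact min_le_right _ _
      _ = _ := by ring

theorem statement3_general :
    ∃ c : ℝ, 0 < c ∧
      ∀ (n : ℕ) (Ω : Type*) (_mΩ : MeasurableSpace Ω) (P : Measure Ω),
        IsProbabilityMeasure P →
        ∀ (X : Ω → EuclideanSpace ℝ (Fin n)) (f : EuclideanSpace ℝ (Fin n) → ℝ)
          (α b : ℝ) (A : Matrix (Fin n) (Fin n) ℝ),
          HasDensityFn P X f → IsLogConcaveFn f → Isotropic P X →
          1 ≤ α → α ≤ 2 → IsPsiAlpha P X α b → hsNorm A ≠ 0 →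
          ∀ t : ℝ, 0 ≤ t →
            P {ω | (1 + t) * hsNorm A ≤ ‖mApp A (X ω)‖} ≤
              ENNReal.ofReal (exp (-(c * (hsNorm A ^ 2 / (opNorm A ^ 2 * b ^ 2)) ^ (α / 2) *
                min (t ^ (2 + α)) t))) := by
  refine ⟨1 / 2 ^ 101, by positivity, ?_⟩
  rintro n Ω _ P _ X f α b A ⟨hX_meas, hX_law⟩ hf hX hα hα_le hψ hA t ht
  set T := LinearMap.toContinuousLinearMap (Matrix.toEuclideanLin A)
  have hT : mApp A = T := rfl
  have hn : 0 < n := Nat.pos_of_ne_zero fun hn => hA (by subst hn; simp [hsNorm])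
  have hb : 0 < b := hψ.pos hX hn
  have h_law : PrekopaLeindler (P.map X) := hX_law ▸ hf.prekopaLeindler_withDensity
  have h_pl : PrekopaLeindler ((P.map X).map (mApp A)) :=
    PrekopaLeindlerWith.map (f := Matrix.toEuclideanLin A) h_law T.measurable fun _ _ => le_rfl
  have h_psi := (hψ.hasPsiMoments_map hX hX_meas h_law).map hb.le T
  have : IsProbabilityMeasure (P.map X) := Measure.isProbabilityMeasure_map hX_meas.aemeasurable
  have : IsProbabilityMeasure ((P.map X).map (mApp A)) :=
    Measure.isProbabilityMeasure_map T.measurable.aemeasurable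
  have h_tail := measure_norm_ge_le h_pl (hX.isCenteredOfVariance_map_mApp hX_meas A) h_psi
    (by positivity) (mul_pos hb (opNorm_pos hA)) hα hα_le ht
  rw [hT, Measure.map_map T.measurable hX_meas, Measure.map_apply (T.measurable.comp hX_meas)
    (measurableSet_le measurable_const measurable_norm), sqrt_sq (hsNorm_nonneg A), mul_pow,
    mul_comm (b ^ 2)] at h_tail
  exact h_tail

/-- sharp positive large-deviation estimate for `|AX|`. -/
theorem statement3 :
    ∃ c : ℝ, 0 < c ∧
      ∀ (n : ℕ) (Ω : Type) (_mΩ : MeasurableSpace Ω) (P : Measure Ω),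
        IsProbabilityMeasure P →
        ∀ (X : Ω → EuclideanSpace ℝ (Fin n)) (f : EuclideanSpace ℝ (Fin n) → ℝ)
          (α b : ℝ) (A : Matrix (Fin n) (Fin n) ℝ),
          HasDensityFn P X f → IsLogConcaveFn f → Isotropic P X →
          1 ≤ α → α ≤ 2 → IsPsiAlpha P X α b →
          hsNorm A ^ 2 = n →
          ∀ t : ℝ, 0 ≤ t →
            P {ω | (1 + t) * Real.sqrt n ≤ ‖mApp A (X ω)‖} ≤
              ENNReal.ofReal (Real.exp
                (-(c * ((n : ℝ) / (opNorm A ^ 2 * b ^ 2)) ^ (α/2) *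
                  min (t ^ (2 + α)) t))) := by
  obtain ⟨c, hc, h⟩ := statement3_general
  refine ⟨c, hc, fun n Ω _ P hP X f α b A hX hf hI hα hα_le hψ hA t ht => ?_⟩
  rcases eq_or_ne n 0 with rfl | hn
  · simp [zero_rpow (show α / 2 ≠ 0 by positivity)]
  · have hA_sqrt : hsNorm A = √n := by rw [← hA, sqrt_sq (hsNorm_nonneg A)]
    rw [← hA_sqrt, ← hA]
    exact h n Ω _ P hP X f α b A hX hf hI hα hα_le hψ (by rw [hA_sqrt]; positivity) t ht
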